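/- arXiv:1408.5659 — 2 statements merged into one kernel-verified Lean document; each statement's English description precedes it below -/
import Mathlib

section
/- There exist absolute constants c₁, c₂ > 0 such that for all 0 < δ < 1/4: c₁·δ² ≤ sup_{f ∈ B_∞^{0,0} ∩ M²} ω_φ²(f, δ)_{w_{0,0}, 1} ≤ c₂·δ², where w_{0,0} ≡ 1, i.e., the supremum over all convex functions f on (−1,1) with ‖f‖_∞ = 1 of the unweighted modulus ω_φ²(f, δ)_{1,1} is comparable to δ². -/
open MeasureTheory Set Filter
open scoped ENNReal

noncomputable section

/-- The Jacobi weight `w_{α,β}(x) = (1+x)^α (1-x)^β`. -/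
def jacobi (α β : ℝ) (x : ℝ) : ℝ := (1 + x) ^ α * (1 - x) ^ β

/-- `φ(x) = √(1-x²)`. -/
def phiW (x : ℝ) : ℝ := Real.sqrt (1 - x ^ 2)

/-- The `L^p` norm of `g` on the interval `[a,b]` (essential sup when `p = ∞`). -/
def LpOn (g : ℝ → ℝ) (p : ℝ≥0∞) (a b : ℝ) : ℝ≥0∞ :=
  eLpNorm g p (volume.restrict (Icc a b))

/-- The `k`-th symmetric difference `Δ_h^k(f,x)` relative to `[-1,1]`. -/
def symmDelta (k : ℕ) (h : ℝ) (f : ℝ → ℝ) (x : ℝ) : ℝ :=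
  if (x - k * h / 2 ∈ Icc (-1 : ℝ) 1 ∧ x + k * h / 2 ∈ Icc (-1 : ℝ) 1) then
    ∑ i ∈ Finset.range (k + 1), ((k.choose i : ℝ) * (-1 : ℝ) ^ (k - i) * f (x - k * h / 2 + i * h))
  else 0

/-- Main-part weighted modulus `Ω_φ^k(f,δ)_{w,p}`. -/
def OmegaMain (k : ℕ) (f : ℝ → ℝ) (δ : ℝ) (wt : ℝ → ℝ) (p : ℝ≥0∞) : ℝ≥0∞ :=
  ⨆ h ∈ Ioc (0 : ℝ) δ,
    LpOn (fun x => wt x * symmDelta k (h * phiW x) f x) p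
      (-1 + 2 * (k : ℝ) ^ 2 * h ^ 2) (1 - 2 * (k : ℝ) ^ 2 * h ^ 2)

/-- Forward part `Ω→_φ^k(f,δ)_{w,p}`. -/
def OmegaFwd (k : ℕ) (f : ℝ → ℝ) (δ : ℝ) (wt : ℝ → ℝ) (p : ℝ≥0∞) : ℝ≥0∞ :=
  ⨆ h ∈ Ioc (0 : ℝ) (2 * (k : ℝ) ^ 2 * δ ^ 2),
    LpOn (fun x => wt x * symmDelta k h f (x + k * h / 2)) p
      (-1) (-1 + 2 * (k : ℝ) ^ 2 * δ ^ 2)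

/-- Backward part `Ω←_φ^k(f,δ)_{w,p}`. -/
def OmegaBwd (k : ℕ) (f : ℝ → ℝ) (δ : ℝ) (wt : ℝ → ℝ) (p : ℝ≥0∞) : ℝ≥0∞ :=
  ⨆ h ∈ Ioc (0 : ℝ) (2 * (k : ℝ) ^ 2 * δ ^ 2),
    LpOn (fun x => wt x * symmDelta k h f (x - k * h / 2)) p
      (1 - 2 * (k : ℝ) ^ 2 * δ ^ 2) 1

/-- Weighted Ditzian–Totik modulus `ω_φ^k(f,δ)_{w,p}`. -/
def omegaDT (k : ℕ) (f : ℝ → ℝ) (δ : ℝ) (wt : ℝ → ℝ) (p : ℝ≥0∞) : ℝ≥0∞ :=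
  OmegaMain k f δ wt p + OmegaFwd k f δ wt p + OmegaBwd k f δ wt p

/-- `f` is `k`-monotone on `(-1,1)`: all `k`-th divided differences over `k+1` distinct
points of `(-1,1)` are nonnegative. -/
def kMonotoneOn (k : ℕ) (f : ℝ → ℝ) : Prop :=
  ∀ x : Fin (k + 1) → ℝ, Function.Injective x → (∀ i, x i ∈ Ioo (-1 : ℝ) 1) →
    0 ≤ ∑ i, f (x i) / ∏ j ∈ Finset.univ.erase i, (x i - x j)

/-- `M^k`, the class of `k`-monotone functions on `(-1,1)`. -/
def MSet (k : ℕ) : Set (ℝ → ℝ) := {f | kMonotoneOn k f}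

/-- `M_+^k`, the `k`-monotone functions on `(-1,1)` vanishing on `(-1,0]`. -/
def MPlus (k : ℕ) : Set (ℝ → ℝ) :=
  {f | kMonotoneOn k f ∧ ∀ x : ℝ, -1 < x → x ≤ 0 → f x = 0}

/-- `J_p = (-1/p, ∞)` for finite `p`, `[0,∞)` for `p = ∞`. -/
def Jset (p : ℝ≥0∞) : Set ℝ := if p = ∞ then Ici 0 else Ioi (-1 / p.toReal)

/-- `W_p^{α,β}`. -/
def WSet (p : ℝ≥0∞) (α β : ℝ) : Set (ℝ → ℝ) :=
  {f | Measurable f ∧ LpOn (fun x => jacobi α β x * f x) p (-1) 1 ≠ ⊤}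

/-- `B_p^{α,β}`, the unit sphere of `W_p^{α,β}`. -/
def BSet (p : ℝ≥0∞) (α β : ℝ) : Set (ℝ → ℝ) :=
  {f | Measurable f ∧ LpOn (fun x => jacobi α β x * f x) p (-1) 1 = 1}

/-- Best weighted approximation `E_n(f)_{w,q}` by polynomials of degree at most `n`. -/
def En (n : ℕ) (f : ℝ → ℝ) (wt : ℝ → ℝ) (q : ℝ≥0∞) : ℝ≥0∞ :=
  ⨅ P ∈ {P : Polynomial ℝ | P.natDegree ≤ n},
    LpOn (fun x => wt x * (f x - P.eval x)) q (-1) 1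

/-- `E(X, P_n)_{w,q}`. -/
def EClass (X : Set (ℝ → ℝ)) (n : ℕ) (wt : ℝ → ℝ) (q : ℝ≥0∞) : ℝ≥0∞ :=
  ⨆ f ∈ X, En n f wt q

lemma kmon_convex {f : ℝ → ℝ} (hf : kMonotoneOn 2 f) : ConvexOn ℝ (Ioo (-1 : ℝ) 1) f := by
  apply convexOn_of_slope_mono_adjacent (convex_Ioo _ _)
  intro x y z hx hz hxy hyz
  have hy : y ∈ Ioo (-1 : ℝ) 1 := ⟨hx.1.trans hxy, hyz.trans hz.2⟩
  have h := hf ![x, y, z] (by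
    intro i j hij
    fin_cases i <;> fin_cases j <;> simp at hij ⊢ <;> linarith) (by
    intro i; fin_cases i <;> simp <;> first | exact hx | exact hy | exact hz)
  have e0 : (Finset.univ.erase (0 : Fin 3)) = {1, 2} := by decide
  have e1 : (Finset.univ.erase (1 : Fin 3)) = {0, 2} := by decide
  have e2 : (Finset.univ.erase (2 : Fin 3)) = {0, 1} := by decide
  rw [Fin.sum_univ_three, e0, e1, e2] at h
  simp at h
  have p1 : 0 < y - x := by linarith
  have p2 : 0 < z - y := by linarith
  have p3 : 0 < z - x := by linarith
  have key : (f z - f y) / (z - y) - (f y - f x) / (y - x) =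
      (z - x) * (f x / ((x - y) * (x - z)) + f y / ((y - x) * (y - z)) +
        f z / ((z - x) * (z - y))) := by
    have q1 : x - y ≠ 0 := by linarith
    have q2 : x - z ≠ 0 := by linarith
    have q3 : y - z ≠ 0 := by linarith
    rw [← neg_sub y x, ← neg_sub z x, ← neg_sub z y]
    field_simp
    ring
  nlinarith [mul_nonneg p3.le h]

lemma ae_bound {f : ℝ → ℝ} {M : ℝ} (hc : ContinuousOn f (Ioo (-1 : ℝ) 1))
    (h : ∀ᵐ x ∂(volume.restrict (Icc (-1 : ℝ) 1)), |f x| ≤ M) :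
    ∀ x ∈ Ioo (-1 : ℝ) 1, |f x| ≤ M := by
  intro x hx
  by_contra hlt
  push Not at hlt
  have hopen : IsOpen (Ioo (-1 : ℝ) 1 ∩ (fun x => |f x|) ⁻¹' Ioi M) :=
    hc.abs.isOpen_inter_preimage isOpen_Ioo isOpen_Ioi
  have hpos := hopen.measure_pos volume ⟨x, hx, hlt⟩
  rw [ae_restrict_iff' measurableSet_Icc, ae_iff] at h
  have : volume (Ioo (-1 : ℝ) 1 ∩ (fun x => |f x|) ⁻¹' Ioi M) ≤ 0 := by
    rw [← h]
    apply measure_mono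
    rintro y ⟨hy, hy2⟩
    simp only [mem_ofPred_eq, not_forall]
    exact ⟨Ioo_subset_Icc_self hy, not_le.mpr hy2⟩
  exact absurd hpos (not_lt.mpr this)

lemma jac0 (x : ℝ) : jacobi 0 0 x = 1 := by simp [jacobi]

lemma B_bound {f : ℝ → ℝ} (hB : f ∈ BSet ∞ 0 0) (hc : ContinuousOn f (Ioo (-1 : ℝ) 1)) :
    ∀ x ∈ Ioo (-1 : ℝ) 1, |f x| ≤ 1 := by
  apply ae_bound hc
  have h2 := hB.2
  simp only [jac0, one_mul, LpOn] at h2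
  have := ae_le_eLpNormEssSup (f := f) (μ := volume.restrict (Icc (-1 : ℝ) 1))
  rw [← eLpNorm_exponent_top, h2] at this
  filter_upwards [this] with x hx
  rw [← ofReal_norm] at hx
  simpa using hx

lemma sq_mem_B : (fun x : ℝ => x ^ 2) ∈ BSet ∞ 0 0 := by
  refine ⟨by fun_prop, ?_⟩
  simp only [jac0, one_mul, LpOn]
  have hle : eLpNorm (fun x : ℝ => x ^ 2) ∞ (volume.restrict (Icc (-1 : ℝ) 1)) ≤ 1 := by
    rw [eLpNorm_exponent_top]
    apply eLpNormEssSup_le_of_ae_enorm_bound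
    filter_upwards [ae_restrict_mem measurableSet_Icc] with x hx
    rw [← ofReal_norm]
    have : x ^ 2 ≤ 1 := by nlinarith [hx.1, hx.2]
    simpa using this
  apply le_antisymm hle
  set N := eLpNorm (fun x : ℝ => x ^ 2) ∞ (volume.restrict (Icc (-1 : ℝ) 1)) with hN
  have hNt : N ≠ ⊤ := ne_top_of_le_ne_top (by simp) hle
  have hb := ae_bound (f := fun x : ℝ => x ^ 2) (M := N.toReal) (by fun_prop) (by
    have := ae_le_eLpNormEssSup (f := fun x : ℝ => x ^ 2) (μ := volume.restrict (Icc (-1 : ℝ) 1))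
    rw [← eLpNorm_exponent_top, ← hN] at this
    filter_upwards [this] with x hx
    rw [← ofReal_norm, ENNReal.ofReal_le_iff_le_toReal hNt] at hx
    simpa using hx)
  have h1 : 1 ≤ N.toReal := by
    by_contra hlt
    push Not at hlt
    have h0 : 0 ≤ N.toReal := ENNReal.toReal_nonneg
    have := hb ((1 + N.toReal) / 2) ⟨by linarith, by linarith⟩
    rw [abs_of_nonneg (by positivity)] at this
    nlinarith
  rw [← ENNReal.ofReal_toReal hNt]
  simpa using h1

lemma sq_mem_M : (fun x : ℝ => x ^ 2) ∈ MSet 2 := by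
  intro x hx _
  have e0 : (Finset.univ.erase (0 : Fin 3)) = {1, 2} := by decide
  have e1 : (Finset.univ.erase (1 : Fin 3)) = {0, 2} := by decide
  have e2 : (Finset.univ.erase (2 : Fin 3)) = {0, 1} := by decide
  rw [Fin.sum_univ_three, e0, e1, e2]
  simp
  have q1 : x 0 - x 1 ≠ 0 := sub_ne_zero.mpr (fun h => by simpa using hx h)
  have q2 : x 0 - x 2 ≠ 0 := sub_ne_zero.mpr (fun h => by simpa using hx h)
  have q3 : x 1 - x 2 ≠ 0 := sub_ne_zero.mpr (fun h => by simpa using hx h)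
  rw [← neg_sub (x 0) (x 1), ← neg_sub (x 0) (x 2), ← neg_sub (x 1) (x 2)]
  have : x 0 ^ 2 / ((x 0 - x 1) * (x 0 - x 2)) + x 1 ^ 2 / (-(x 0 - x 1) * (x 1 - x 2)) +
    x 2 ^ 2 / (-(x 0 - x 2) * -(x 1 - x 2)) = 1 := by
    field_simp
    ring
  rw [this]; norm_num

lemma symm2 (s : ℝ) (f : ℝ → ℝ) (x : ℝ) (h1 : x - s ∈ Icc (-1 : ℝ) 1) (h2 : x + s ∈ Icc (-1 : ℝ) 1) :
    symmDelta 2 s f x = f (x - s) + f (x + s) - 2 * f x := by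
  have e : ((2 : ℕ) : ℝ) * s / 2 = s := by push_cast; ring
  unfold symmDelta
  rw [e, if_pos ⟨h1, h2⟩]
  simp [Finset.sum_range_succ]
  rw [show x - s + 2 * s = x + s by ring]
  ring

lemma phi_sq {x : ℝ} (hx : |x| ≤ 1) : phiW x ^ 2 = 1 - x ^ 2 := by
  unfold phiW
  apply Real.sq_sqrt
  have := abs_le.mp hx
  nlinarith

lemma phi_nonneg (x : ℝ) : 0 ≤ phiW x := Real.sqrt_nonneg _

lemma phi_cont : Continuous phiW := by unfold phiW; fun_prop

lemma hphi_lt {h x : ℝ} (h0 : 0 < h) (hx : |x| ≤ 1 - 8 * h ^ 2) : h * phiW x < 1 - |x| := by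
  have hp : 0 < 8 * h ^ 2 := by positivity
  have hs := phi_sq (x := x) (by linarith)
  rw [← sq_abs x] at hs
  apply lt_of_pow_lt_pow_left₀ 2 (by linarith)
  rw [mul_pow, hs]
  have h3 := abs_nonneg x
  have : h ^ 2 * (1 + |x|) < 1 - |x| := by nlinarith
  nlinarith

/-- change of variable -/
lemma cov {f : ℝ → ℝ} (hc : ContinuousOn f (Ioo (-1 : ℝ) 1)) (hb : ∀ x ∈ Ioo (-1 : ℝ) 1, |f x| ≤ 1)
    {h a e : ℝ} (h0 : 0 < h) (h1 : h < 1 / 4) (ha : a = 1 - 8 * h ^ 2) (he : e = h * phiW a) :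
    |(∫ x in (-a)..a, f (x + h * phiW x)) -
      ∫ y in (-a + e)..(a - e), f y * ((1 + h * (y / √(1 + h ^ 2 - y ^ 2))) / (1 + h ^ 2))| ≤ 4 * e := by
  have hp : 0 < h ^ 2 := by positivity
  have ha1 : a < 1 := by linarith
  have ha0 : 1 / 2 < a := by nlinarith
  have he0 : 0 ≤ e := by rw [he]; exact mul_nonneg h0.le (phi_nonneg _)
  have hea : e < 1 - a := by
    have := hphi_lt (x := a) h0 (by rw [abs_of_pos (by linarith)]; linarith)
    rwa [abs_of_pos (by linarith), ← he] at this
  have hpa := phi_sq (x := a) (by rw [abs_of_pos (by linarith)]; linarith)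
  have hr : ∀ y : ℝ, |y| ≤ 1 → h ≤ √(1 + h ^ 2 - y ^ 2) := by
    intro y hy
    apply Real.le_sqrt_of_sq_le
    have := (sq_le_one_iff_abs_le_one y).mpr hy
    linarith
  have hrs : ∀ y : ℝ, |y| ≤ 1 → √(1 + h ^ 2 - y ^ 2) ^ 2 = 1 + h ^ 2 - y ^ 2 := by
    intro y hy
    apply Real.sq_sqrt
    have := (sq_le_one_iff_abs_le_one y).mpr hy
    linarith
  set ψ : ℝ → ℝ := fun y => (y - h * √(1 + h ^ 2 - y ^ 2)) / (1 + h ^ 2) with hψ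
  set ψ' : ℝ → ℝ := fun y => (1 + h * (y / √(1 + h ^ 2 - y ^ 2))) / (1 + h ^ 2) with hψ'
  have hder : ∀ y : ℝ, |y| ≤ 1 → HasDerivAt ψ (ψ' y) y := by
    intro y hy
    have hpos : 0 < √(1 + h ^ 2 - y ^ 2) := lt_of_lt_of_le h0 (hr y hy)
    have hne : 1 + h ^ 2 - y ^ 2 ≠ 0 := (Real.sqrt_pos.mp hpos).ne'
    have d1 : HasDerivAt (fun y : ℝ => 1 + h ^ 2 - y ^ 2) (-(2 * y)) y := by
      simpa using (hasDerivAt_pow 2 y).const_sub (1 + h ^ 2)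
    have d2 := ((hasDerivAt_id y).sub ((d1.sqrt hne).const_mul h)).div_const (1 + h ^ 2)
    have e : ψ' y = (1 - h * (-(2 * y) / (2 * √(1 + h ^ 2 - y ^ 2)))) / (1 + h ^ 2) := by
      show (1 + h * (y / √(1 + h ^ 2 - y ^ 2))) / (1 + h ^ 2) = _
      field_simp
      ring
    rw [e]
    exact d2
  have hinv : ∀ y : ℝ, |y| ≤ 1 → ψ y + h * phiW (ψ y) = y := by
    intro y hy
    have h2 := hr y hy
    have h3 := hrs y hy
    have h4 := abs_le.mp hy
    have : phiW (ψ y) = (√(1 + h ^ 2 - y ^ 2) + h * y) / (1 + h ^ 2) := by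
      unfold phiW
      rw [Real.sqrt_eq_iff_eq_sq]
      · simp only [hψ]
        field_simp
        nlinarith
      · simp only [hψ]
        have : 1 - ((y - h * √(1 + h ^ 2 - y ^ 2)) / (1 + h ^ 2)) ^ 2
          = ((√(1 + h ^ 2 - y ^ 2) + h * y) / (1 + h ^ 2)) ^ 2 := by
          field_simp
          nlinarith
        rw [this]; positivity
      · apply div_nonneg _ (by positivity)
        nlinarith
    rw [this]
    simp only [hψ]
    field_simp
    ring
  have hle : ∀ y : ℝ, |y| ≤ 1 → ‖ψ' y‖ ≤ 2 := by
    intro y hy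
    have h2 := hr y hy
    have h5 : |h * (y / √(1 + h ^ 2 - y ^ 2))| ≤ 1 := by
      rw [abs_mul, abs_div, abs_of_pos h0, abs_of_pos (lt_of_lt_of_le h0 h2), ← mul_div_assoc,
        div_le_one (lt_of_lt_of_le h0 h2)]
      nlinarith
    have h6 := abs_le.mp h5
    simp only [hψ', Real.norm_eq_abs]
    rw [abs_div, abs_of_pos (show 0 < 1 + h ^ 2 by positivity), div_le_iff₀ (by positivity), abs_le]
    constructor <;> nlinarith
  have hψc : ContinuousOn ψ' (Icc (-1) 1) := by
    intro y hy
    apply ContinuousAt.continuousWithinAt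
    have hpos : 0 < √(1 + h ^ 2 - y ^ 2) := lt_of_lt_of_le h0 (hr y (abs_le.mpr hy))
    have : √(1 + h ^ 2 - y ^ 2) ≠ 0 := hpos.ne'
    simp only [hψ']
    fun_prop (disch := assumption)
  have hψe : ∀ x : ℝ, |x| ≤ a → ψ (x + h * phiW x) = x := by
    intro x hx
    have h2 := hphi_lt h0 (hx.trans_eq ha)
    have h3 := phi_sq (x := x) (by linarith)
    have h4 := abs_le.mp hx
    have h5 := phi_nonneg x
    have : √(1 + h ^ 2 - (x + h * phiW x) ^ 2) = phiW x - h * x := by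
      have hn : 0 ≤ phiW x - h * x := by
        have : h * |x| ≤ phiW x := by
          apply (sq_le_sq₀ (by positivity) h5).mp
          rw [mul_pow, h3, sq_abs]
          have : x ^ 2 ≤ a ^ 2 := by nlinarith
          nlinarith
        nlinarith [le_abs_self x]
      rw [Real.sqrt_eq_iff_eq_sq _ hn]
      · nlinarith
      · rw [show 1 + h ^ 2 - (x + h * phiW x) ^ 2 = (phiW x - h * x) ^ 2 by nlinarith]
        positivity
    simp only [hψ]
    rw [this]
    field_simp
    ring
  have e1 : ψ (-a + e) = -a := by
    have := hψe (-a) (by rw [abs_neg, abs_of_pos (by linarith)])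
    rwa [show phiW (-a) = phiW a by simp [phiW], ← he] at this
  have e2 : ψ (a + e) = a := by
    have := hψe a (by rw [abs_of_pos (by linarith)])
    rwa [← he] at this
  have hIsub : Icc (-a + e) (a + e) ⊆ Ioo (-1) 1 := by
    intro y hy
    exact ⟨by linarith [hy.1], by linarith [hy.2]⟩
  have hu : uIcc (-a + e) (a + e) = Icc (-a + e) (a + e) := uIcc_of_le (by linarith)
  have hmono : MonotoneOn ψ (Icc (-1) 1) := by
    apply monotoneOn_of_deriv_nonneg (convex_Icc _ _)
    · intro y hy
      exact (hder y (abs_le.mpr hy)).continuousAt.continuousWithinAt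
    · intro y hy
      rw [interior_Icc] at hy
      exact (hder y (abs_le.mpr (Ioo_subset_Icc_self hy))).differentiableAt.differentiableWithinAt
    · intro y hy
      rw [interior_Icc] at hy
      have hy' := abs_le.mpr (Ioo_subset_Icc_self hy)
      rw [(hder y hy').deriv]
      simp only [hψ']
      have h2 := hr y hy'
      have hpos := lt_of_lt_of_le h0 h2
      apply div_nonneg _ (by positivity)
      have : -1 ≤ h * (y / √(1 + h ^ 2 - y ^ 2)) := by
        rw [← mul_div_assoc, le_div_iff₀ hpos]
        nlinarith [hy.1]
      linarith
  have main : ∫ x in (-a)..a, f (x + h * phiW x) = ∫ y in (-a + e)..(a + e), f y * ψ' y := by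
    have := intervalIntegral.integral_comp_mul_deriv'' (a := -a + e) (b := a + e) (f := ψ) (f' := ψ')
      (g := fun x => f (x + h * phiW x)) ?_ ?_ ?_ ?_
    · rw [e1, e2] at this
      rw [← this]
      apply intervalIntegral.integral_congr
      intro y hy
      rw [hu] at hy
      simp only [Function.comp]
      rw [hinv y (abs_le.mpr (Ioo_subset_Icc_self (hIsub hy)))]
    · intro y hy
      rw [hu] at hy
      exact (hder y (abs_le.mpr (Ioo_subset_Icc_self (hIsub hy)))).continuousAt.continuousWithinAt
    · intro y hy
      rw [min_eq_left (by linarith), max_eq_right (by linarith)] at hy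
      exact (hder y (abs_le.mpr (Ioo_subset_Icc_self (hIsub (Ioo_subset_Icc_self hy))))).hasDerivWithinAt
    · rw [hu]
      exact hψc.mono (hIsub.trans Ioo_subset_Icc_self)
    · rw [hu]
      apply hc.comp
      · exact (continuous_id.add (continuous_const.mul phi_cont)).continuousOn
      · rintro x ⟨y, hy, rfl⟩
        show ψ y + h * phiW (ψ y) ∈ _
        rw [hinv y (abs_le.mpr (Ioo_subset_Icc_self (hIsub hy)))]
        exact hIsub hy
  have hint : ∀ p q : ℝ, -a + e ≤ p → p ≤ q → q ≤ a + e →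
      IntervalIntegrable (fun y => f y * ψ' y) volume p q := by
    intro p q hp hpq hq
    apply ContinuousOn.intervalIntegrable
    rw [uIcc_of_le hpq]
    have hs : Icc p q ⊆ Ioo (-1) 1 := (Icc_subset_Icc hp hq).trans hIsub
    exact (hc.mono hs).mul (hψc.mono (hs.trans Ioo_subset_Icc_self))
  have hae : -a + e ≤ a - e := by linarith
  rw [main, ← intervalIntegral.integral_add_adjacent_intervals (hint _ (a - e) le_rfl hae (by linarith))
    (hint (a - e) (a + e) hae (by linarith) le_rfl), add_sub_cancel_left, ← Real.norm_eq_abs]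
  have := intervalIntegral.norm_integral_le_of_norm_le_const (a := a - e) (b := a + e) (C := 2)
    (f := fun y => f y * ψ' y) (by
      intro y hy
      rw [uIoc_of_le (by linarith)] at hy
      have hy1 : y ∈ Ioo (-1 : ℝ) 1 := hIsub ⟨by linarith [hy.1], hy.2⟩
      rw [norm_mul]
      have b1 := hb y hy1
      have b2 := hle y (abs_le.mpr (Ioo_subset_Icc_self hy1))
      rw [← Real.norm_eq_abs] at b1
      calc _ ≤ 1 * 2 := mul_le_mul b1 b2 (norm_nonneg _) (by norm_num)
        _ = 2 := by norm_num)
  refine this.trans ?_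
  rw [show a + e - (a - e) = 2 * e by ring, abs_of_nonneg (by linarith)]
  linarith

lemma main_int {f : ℝ → ℝ} (hc : ContinuousOn f (Ioo (-1 : ℝ) 1)) (hb : ∀ x ∈ Ioo (-1 : ℝ) 1, |f x| ≤ 1)
    {h a : ℝ} (h0 : 0 < h) (h1 : h < 1 / 4) (ha : a = 1 - 8 * h ^ 2) :
    (∫ x in (-a)..a, f (x - h * phiW x)) + (∫ x in (-a)..a, f (x + h * phiW x))
      - 2 * ∫ x in (-a)..a, f x ≤ 52 * h ^ 2 := by
  have hp : 0 < h ^ 2 := by positivity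
  have ha1 : a < 1 := by linarith
  have ha0 : 1 / 2 < a := by nlinarith
  obtain ⟨e, he⟩ : ∃ e, e = h * phiW a := ⟨_, rfl⟩
  have he0 : 0 ≤ e := by rw [he]; exact mul_nonneg h0.le (phi_nonneg _)
  have hea : e < 1 - a := by
    have := hphi_lt (x := a) h0 (by rw [abs_of_pos (by linarith)]; linarith)
    rwa [abs_of_pos (by linarith), ← he] at this
  have hpa := phi_sq (x := a) (by rw [abs_of_pos (by linarith)]; linarith)
  have he4 : e ≤ 4 * h ^ 2 := by
    apply (sq_le_sq₀ he0 (by positivity)).mp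
    rw [he, mul_pow, hpa]
    have : 1 - a ^ 2 ≤ 16 * h ^ 2 := by nlinarith
    nlinarith
  have I1 := cov hc hb h0 h1 ha he
  have hneg : MapsTo (fun x : ℝ => -x) (Ioo (-1 : ℝ) 1) (Ioo (-1) 1) := by
    intro x hx; exact ⟨by linarith [hx.2], by linarith [hx.1]⟩
  have I2 := cov (f := fun x => f (-x)) (hc.comp continuous_neg.continuousOn hneg)
    (fun x hx => hb _ (hneg hx)) h0 h1 ha he
  have s1 : ∫ x in (-a)..a, f (-(x + h * phiW x)) = ∫ x in (-a)..a, f (x - h * phiW x) := by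
    have := intervalIntegral.integral_comp_neg (a := -a) (b := a) (fun x => f (x - h * phiW x))
    rw [neg_neg] at this
    rw [← this]
    congr 1
    ext x
    rw [show phiW (-x) = phiW x by simp [phiW]]
    congr 1
    ring
  have s2 : ∫ y in (-a + e)..(a - e), f (-y) * ((1 + h * (y / √(1 + h ^ 2 - y ^ 2))) / (1 + h ^ 2)) =
      ∫ y in (-a + e)..(a - e), f y * ((1 - h * (y / √(1 + h ^ 2 - y ^ 2))) / (1 + h ^ 2)) := by
    have := intervalIntegral.integral_comp_neg (a := -a + e) (b := a - e)
      (fun y => f y * ((1 - h * (y / √(1 + h ^ 2 - y ^ 2))) / (1 + h ^ 2)))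
    rw [show -(a - e) = -a + e by ring, show -(-a + e) = a - e by ring] at this
    rw [← this]
    congr 1
    ext x
    rw [neg_sq, neg_div]
    ring
  rw [s1, s2] at I2
  have hIsub : Icc (-a) a ⊆ Ioo (-1) 1 := by
    intro y hy
    exact ⟨by linarith [hy.1], by linarith [hy.2]⟩
  have hcr : ContinuousOn (fun y => y / √(1 + h ^ 2 - y ^ 2)) (Icc (-a) a) := by
    intro y hy
    apply ContinuousAt.continuousWithinAt
    have hpos : 0 < √(1 + h ^ 2 - y ^ 2) := by
      apply Real.sqrt_pos.mpr
      have := hIsub hy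
      nlinarith [this.1, this.2]
    have : √(1 + h ^ 2 - y ^ 2) ≠ 0 := hpos.ne'
    fun_prop (disch := assumption)
  have hcf := hc.mono hIsub
  have hae : -a + e ≤ a - e := by linarith
  have hs2 : uIcc (-a + e) (a - e) ⊆ Icc (-a) a := by
    rw [uIcc_of_le hae]
    exact Icc_subset_Icc (by linarith) (by linarith)
  have s3 : (∫ y in (-a + e)..(a - e), f y * ((1 + h * (y / √(1 + h ^ 2 - y ^ 2))) / (1 + h ^ 2))) +
      (∫ y in (-a + e)..(a - e), f y * ((1 - h * (y / √(1 + h ^ 2 - y ^ 2))) / (1 + h ^ 2))) =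
      (2 / (1 + h ^ 2)) * ∫ y in (-a + e)..(a - e), f y := by
    rw [← intervalIntegral.integral_add, ← intervalIntegral.integral_const_mul]
    · congr 1
      ext y
      ring
    · apply ContinuousOn.intervalIntegrable
      apply ContinuousOn.mono _ hs2
      exact hcf.mul ((continuousOn_const.add (continuousOn_const.mul hcr)).div_const _)
    · apply ContinuousOn.intervalIntegrable
      apply ContinuousOn.mono _ hs2
      exact hcf.mul ((continuousOn_const.sub (continuousOn_const.mul hcr)).div_const _)
  have hint : ∀ p q : ℝ, -a ≤ p → p ≤ q → q ≤ a → IntervalIntegrable f volume p q := by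
    intro p q hp hpq hq
    apply ContinuousOn.intervalIntegrable
    rw [uIcc_of_le hpq]
    exact hcf.mono (Icc_subset_Icc hp hq)
  have hbd : ∀ p q : ℝ, -a ≤ p → p ≤ q → q ≤ a → |∫ x in p..q, f x| ≤ q - p := by
    intro p q hp hpq hq
    have := intervalIntegral.norm_integral_le_of_norm_le_const (a := p) (b := q) (C := 1)
      (f := f) (by
        intro y hy
        rw [uIoc_of_le hpq] at hy
        exact hb y (hIsub ⟨by linarith [hy.1], by linarith [hy.2]⟩))
    rwa [one_mul, abs_of_nonneg (by linarith)] at this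
  have s4 := intervalIntegral.integral_add_adjacent_intervals
    (hint (-a) (-a + e) le_rfl (by linarith) (by linarith))
    (hint (-a + e) (a - e) (by linarith) hae (by linarith))
  have s5 := intervalIntegral.integral_add_adjacent_intervals
    (hint (-a) (a - e) le_rfl (by linarith) (by linarith))
    (hint (a - e) a (by linarith) (by linarith) le_rfl)
  have b1 := abs_le.mp (hbd (-a) (-a + e) le_rfl (by linarith) (by linarith))
  have b2 := abs_le.mp (hbd (a - e) a (by linarith) (by linarith) le_rfl)
  have b3 := abs_le.mp (hbd (-a + e) (a - e) (by linarith) hae (by linarith))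
  have i1 := abs_le.mp I1
  have i2 := abs_le.mp I2
  set K := ∫ y in (-a + e)..(a - e), f y
  have s6 : (2 / (1 + h ^ 2)) * K - 2 * K ≤ 4 * h ^ 2 := by
    have : (2 / (1 + h ^ 2)) * K - 2 * K = (- 2 * K) * h ^ 2 / (1 + h ^ 2) := by
      field_simp
      ring
    rw [this, div_le_iff₀ (by positivity)]
    have : -2 * K ≤ 4 := by linarith
    nlinarith
  linarith [i1.2, i2.2, b1.1, b2.1]

lemma convex_delta {f : ℝ → ℝ} (hf : ConvexOn ℝ (Ioo (-1 : ℝ) 1) f) {x s : ℝ}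
    (h1 : x - s ∈ Ioo (-1 : ℝ) 1) (h2 : x + s ∈ Ioo (-1 : ℝ) 1) :
    0 ≤ f (x - s) + f (x + s) - 2 * f x := by
  have := hf.2 h1 h2 (show (0 : ℝ) ≤ 1 / 2 by norm_num) (show (0 : ℝ) ≤ 1 / 2 by norm_num) (by norm_num)
  simp only [smul_eq_mul] at this
  rw [show 1 / 2 * (x - s) + 1 / 2 * (x + s) = x by ring] at this
  linarith

lemma main_mem {h x : ℝ} (h0 : 0 < h)
    (hx : x ∈ Icc (-1 + 2 * ((2 : ℕ) : ℝ) ^ 2 * h ^ 2) (1 - 2 * ((2 : ℕ) : ℝ) ^ 2 * h ^ 2)) :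
    x - h * phiW x ∈ Ioo (-1 : ℝ) 1 ∧ x + h * phiW x ∈ Ioo (-1 : ℝ) 1 := by
  have hx' : |x| ≤ 1 - 8 * h ^ 2 := by
    obtain ⟨l, u⟩ := hx
    push_cast at l u
    exact abs_le.mpr ⟨by linarith, by linarith⟩
  have h2 := hphi_lt h0 hx'
  have h3 := mul_nonneg h0.le (phi_nonneg x)
  have h4 := neg_abs_le x
  have h5 := le_abs_self x
  exact ⟨⟨by linarith, by linarith⟩, ⟨by linarith, by linarith⟩⟩

lemma main_bound {f : ℝ → ℝ} (hf : ConvexOn ℝ (Ioo (-1 : ℝ) 1) f)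
    (hc : ContinuousOn f (Ioo (-1 : ℝ) 1)) (hb : ∀ x ∈ Ioo (-1 : ℝ) 1, |f x| ≤ 1)
    {δ : ℝ} (h1 : δ < 1 / 4) :
    OmegaMain 2 f δ (jacobi 0 0) 1 ≤ ENNReal.ofReal (52 * δ ^ 2) := by
  unfold OmegaMain
  refine iSup₂_le fun h hh => ?_
  obtain ⟨h0, hδ⟩ := hh
  have hI : Icc (-1 + 2 * ((2 : ℕ) : ℝ) ^ 2 * h ^ 2) (1 - 2 * ((2 : ℕ) : ℝ) ^ 2 * h ^ 2)
      = Icc (-(1 - 8 * h ^ 2)) (1 - 8 * h ^ 2) := by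
    push_cast; congr 1 <;> ring
  have hm := fun x => main_mem (x := x) h0
  rw [LpOn, hI, eLpNorm_one_eq_lintegral_enorm]
  rw [hI] at hm
  obtain ⟨a, ha⟩ : ∃ a, a = 1 - 8 * h ^ 2 := ⟨_, rfl⟩
  rw [← ha] at hm ⊢
  have ha0 : 0 < a := by nlinarith
  have hp : 0 < h ^ 2 := by positivity
  have hsub : Icc (-a) a ⊆ Ioo (-1) 1 := by
    intro y hy
    exact ⟨by linarith [hy.1], by linarith [hy.2]⟩
  have c1 : ContinuousOn (fun x => f (x - h * phiW x)) (Icc (-a) a) :=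
    hc.comp (continuous_id.sub (continuous_const.mul phi_cont)).continuousOn (fun x hx => (hm x hx).1)
  have c2 : ContinuousOn (fun x => f (x + h * phiW x)) (Icc (-a) a) :=
    hc.comp (continuous_id.add (continuous_const.mul phi_cont)).continuousOn (fun x hx => (hm x hx).2)
  have c3 : ContinuousOn f (Icc (-a) a) := hc.mono hsub
  have hu : uIcc (-a) a = Icc (-a) a := uIcc_of_le (by linarith)
  have e1 : ∫⁻ x in Icc (-a) a, ‖jacobi 0 0 x * symmDelta 2 (h * phiW x) f x‖ₑ =
      ∫⁻ x in Icc (-a) a, ENNReal.ofReal (f (x - h * phiW x) + f (x + h * phiW x) - 2 * f x) := by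
    apply setLIntegral_congr_fun measurableSet_Icc
    intro x hx
    show ‖jacobi 0 0 x * symmDelta 2 (h * phiW x) f x‖ₑ = _
    rw [jac0, one_mul, symm2 _ _ _ (Ioo_subset_Icc_self (hm x hx).1) (Ioo_subset_Icc_self (hm x hx).2),
      ← ofReal_norm, Real.norm_eq_abs, abs_of_nonneg (convex_delta hf (hm x hx).1 (hm x hx).2)]
  rw [e1, ← ofReal_integral_eq_lintegral_ofReal]
  · apply ENNReal.ofReal_le_ofReal
    rw [integral_Icc_eq_integral_Ioc, ← intervalIntegral.integral_of_le (by linarith),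
      intervalIntegral.integral_sub, intervalIntegral.integral_add, intervalIntegral.integral_const_mul]
    · have := main_int hc hb h0 (by linarith) ha
      have : h ^ 2 ≤ δ ^ 2 := by nlinarith
      linarith
    · exact ContinuousOn.intervalIntegrable (hu ▸ c1)
    · exact ContinuousOn.intervalIntegrable (hu ▸ c2)
    · exact ContinuousOn.intervalIntegrable (hu ▸ (c1.add c2))
    · exact ContinuousOn.intervalIntegrable (hu ▸ (continuousOn_const.mul c3))
  · exact ContinuousOn.integrableOn_Icc ((c1.add c2).sub (continuousOn_const.mul c3))
  · filter_upwards [ae_restrict_mem measurableSet_Icc] with x hx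
    exact convex_delta hf (hm x hx).1 (hm x hx).2

lemma end_bound {g : ℝ → ℝ} {p q δ : ℝ} (hpq : q - p = 8 * δ ^ 2)
    (hg : ∀ᵐ x ∂(volume.restrict (Icc p q)), ‖g x‖ ≤ 4) :
    LpOn g 1 p q ≤ ENNReal.ofReal (32 * δ ^ 2) := by
  refine (eLpNorm_le_of_ae_bound hg).trans ?_
  simp only [Measure.restrict_apply_univ, Real.volume_Icc, ENNReal.toReal_one, inv_one,
    ENNReal.rpow_one]
  rw [hpq, ← ENNReal.ofReal_mul (by positivity)]
  apply ENNReal.ofReal_le_ofReal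
  linarith

lemma delta4 {f : ℝ → ℝ} (hb : ∀ x ∈ Ioo (-1 : ℝ) 1, |f x| ≤ 1) {x s : ℝ}
    (h1 : x - s ∈ Ioo (-1 : ℝ) 1) (h2 : x + s ∈ Ioo (-1 : ℝ) 1) :
    ‖jacobi 0 0 (x - s) * symmDelta 2 s f x‖ ≤ 4 ∧ ‖jacobi 0 0 (x + s) * symmDelta 2 s f x‖ ≤ 4 := by
  rw [jac0, jac0, one_mul, and_self_iff,
    symm2 _ _ _ (Ioo_subset_Icc_self h1) (Ioo_subset_Icc_self h2), Real.norm_eq_abs, abs_le]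
  have b1 := abs_le.mp (hb _ h1)
  have b2 := abs_le.mp (hb _ h2)
  have b3 := abs_le.mp (hb x ⟨by linarith [h1.1, h2.1], by linarith [h1.2, h2.2]⟩)
  constructor <;> linarith [b1.1, b1.2, b2.1, b2.2, b3.1, b3.2]

lemma fwd_bound {f : ℝ → ℝ} (hb : ∀ x ∈ Ioo (-1 : ℝ) 1, |f x| ≤ 1)
    {δ : ℝ} (h0 : 0 < δ) (h1 : δ < 1 / 4) :
    OmegaFwd 2 f δ (jacobi 0 0) 1 ≤ ENNReal.ofReal (32 * δ ^ 2) := by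
  unfold OmegaFwd
  refine iSup₂_le fun h hh => ?_
  obtain ⟨hh0, hh1⟩ := hh
  push_cast at hh1 ⊢
  have hd : δ ^ 2 < 1 / 16 := by nlinarith
  apply end_bound (by ring)
  have hne : ∀ᵐ x ∂(volume.restrict (Icc (-1 : ℝ) (-1 + 2 * 2 ^ 2 * δ ^ 2))), x ≠ -1 :=
    ae_restrict_of_ae (Measure.ae_ne volume _)
  filter_upwards [ae_restrict_mem measurableSet_Icc, hne] with x hx hx1
  have hlt : -1 < x := lt_of_le_of_ne hx.1 (Ne.symm hx1)
  have := (delta4 hb (x := x + h) (s := h) ⟨by linarith, by linarith [hx.2]⟩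
    ⟨by linarith, by linarith [hx.2]⟩).1
  rwa [add_sub_cancel_right, show x + h = x + 2 * h / 2 by ring] at this
  
lemma bwd_bound {f : ℝ → ℝ} (hb : ∀ x ∈ Ioo (-1 : ℝ) 1, |f x| ≤ 1)
    {δ : ℝ} (h0 : 0 < δ) (h1 : δ < 1 / 4) :
    OmegaBwd 2 f δ (jacobi 0 0) 1 ≤ ENNReal.ofReal (32 * δ ^ 2) := by
  unfold OmegaBwd
  refine iSup₂_le fun h hh => ?_
  obtain ⟨hh0, hh1⟩ := hh
  push_cast at hh1 ⊢
  have hd : δ ^ 2 < 1 / 16 := by nlinarith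
  apply end_bound (by ring)
  have hne : ∀ᵐ x ∂(volume.restrict (Icc (1 - 2 * 2 ^ 2 * δ ^ 2) (1 : ℝ))), x ≠ 1 :=
    ae_restrict_of_ae (Measure.ae_ne volume _)
  filter_upwards [ae_restrict_mem measurableSet_Icc, hne] with x hx hx1
  have hlt : x < 1 := lt_of_le_of_ne hx.2 hx1
  have := (delta4 hb (x := x - h) (s := h) ⟨by linarith [hx.1], by linarith⟩
    ⟨by linarith [hx.1], by linarith⟩).2
  rwa [sub_add_cancel, show x - h = x - 2 * h / 2 by ring] at this

lemma lower {δ : ℝ} (h0 : 0 < δ) (h1 : δ < 1 / 4) :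
    ENNReal.ofReal (1 * δ ^ 2) ≤ omegaDT 2 (fun x => x ^ 2) δ (jacobi 0 0) 1 := by
  have hd : δ ^ 2 < 1 / 16 := by nlinarith
  unfold omegaDT
  refine le_trans ?_ (le_self_add.trans le_self_add)
  unfold OmegaMain
  refine le_trans ?_ (le_iSup₂ (f := fun h (_ : h ∈ Ioc (0 : ℝ) δ) =>
    LpOn (fun x => jacobi 0 0 x * symmDelta 2 (h * phiW x) (fun x => x ^ 2) x) 1
      (-1 + 2 * ((2 : ℕ) : ℝ) ^ 2 * h ^ 2) (1 - 2 * ((2 : ℕ) : ℝ) ^ 2 * h ^ 2)) δ ⟨h0, le_rfl⟩)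
  rw [LpOn, eLpNorm_one_eq_lintegral_enorm]
  have hsub : Icc (-(1 / 2) : ℝ) (1 / 2) ⊆
      Icc (-1 + 2 * ((2 : ℕ) : ℝ) ^ 2 * δ ^ 2) (1 - 2 * ((2 : ℕ) : ℝ) ^ 2 * δ ^ 2) := by
    push_cast
    exact Icc_subset_Icc (by linarith) (by linarith)
  refine le_trans ?_ (lintegral_mono_set hsub)
  calc ENNReal.ofReal (1 * δ ^ 2)
      = ∫⁻ x in Icc (-(1 / 2) : ℝ) (1 / 2), ENNReal.ofReal (1 * δ ^ 2) := by
        rw [setLIntegral_const, Real.volume_Icc]; norm_num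
    _ ≤ _ := by
        apply setLIntegral_mono' measurableSet_Icc
        intro x hx
        have hm := main_mem h0 (hsub hx)
        rw [jac0, one_mul, symm2 _ _ _ (Ioo_subset_Icc_self hm.1) (Ioo_subset_Icc_self hm.2),
          ← ofReal_norm, Real.norm_eq_abs]
        apply ENNReal.ofReal_le_ofReal
        refine le_trans ?_ (le_abs_self _)
        have hs := phi_sq (x := x) (abs_le.mpr ⟨by linarith [hx.1], by linarith [hx.2]⟩)
        have e : (x - δ * phiW x) ^ 2 + (x + δ * phiW x) ^ 2 - 2 * x ^ 2 = 2 * δ ^ 2 * (1 - x ^ 2) := by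
          rw [← hs]; ring
        rw [e]
        have : x ^ 2 ≤ 1 / 4 := by nlinarith [hx.1, hx.2]
        nlinarith [sq_nonneg δ]

theorem statement2 :
    ∃ c₁ > (0 : ℝ), ∃ c₂ > (0 : ℝ), ∀ δ : ℝ, 0 < δ → δ < 1 / 4 →
      ENNReal.ofReal (c₁ * δ ^ 2) ≤
        (⨆ f ∈ BSet ∞ 0 0 ∩ MSet 2, omegaDT 2 f δ (jacobi 0 0) 1) ∧
      (⨆ f ∈ BSet ∞ 0 0 ∩ MSet 2, omegaDT 2 f δ (jacobi 0 0) 1) ≤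
        ENNReal.ofReal (c₂ * δ ^ 2) := by
  refine ⟨1, one_pos, 116, by norm_num, fun δ h0 h1 => ⟨?_, ?_⟩⟩
  · exact (lower h0 h1).trans (le_iSup₂ (f := fun f (_ : f ∈ BSet ∞ 0 0 ∩ MSet 2) =>
      omegaDT 2 f δ (jacobi 0 0) 1) (fun x => x ^ 2) ⟨sq_mem_B, sq_mem_M⟩)
  · refine iSup₂_le fun f hf => ?_
    have hcv := kmon_convex hf.2
    have hc : ContinuousOn f (Ioo (-1 : ℝ) 1) := hcv.continuousOn isOpen_Ioo
    have hb := B_bound hf.1 hc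
    unfold omegaDT
    refine (add_le_add (add_le_add (main_bound hcv hc hb h1) (fwd_bound hb h0 h1))
      (bwd_bound hb h0 h1)).trans ?_
    rw [← ENNReal.ofReal_add (by positivity) (by positivity),
      ← ENNReal.ofReal_add (by positivity) (by positivity)]
    apply ENNReal.ofReal_le_ofReal
    linarith
end
end

section
/- Let 1 ≤ q < p ≤ ∞ with p ≠ 2q, and let α, β ∈ J_p. Then there exist constants c₁, c₂ > 0, depending only on q, p, α, β, such that for all 0 < δ < 1/4: (i) if p < 2q, then c₁·δ^{2/q − 2/p} ≤ sup_{f ∈ B_p^{α,β} ∩ M¹} ω_φ¹(f, δ)_{w_{α,β}, q} ≤ c₂·δ^{2/q − 2/p}; (ii) if p > 2q, then c₁·δ^{1/q} ≤ sup_{f ∈ B_p^{α,β} ∩ M¹} ω_φ¹(f, δ)_{w_{α,β}, q} ≤ c₂·δ^{1/q}. -/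
open MeasureTheory Set Filter
open scoped ENNReal

noncomputable section

lemma aux_mono_iff (f : ℝ → ℝ) : f ∈ MSet 1 ↔ MonotoneOn f (Ioo (-1 : ℝ) 1) := by
  have key : ∀ x : Fin 2 → ℝ, (∑ i, f (x i) / ∏ j ∈ Finset.univ.erase i, (x i - x j))
      = f (x 0) / (x 0 - x 1) + f (x 1) / (x 1 - x 0) := by
    intro x
    have h0 : (Finset.univ : Finset (Fin 2)).erase 0 = {1} := by decide
    have h1 : (Finset.univ : Finset (Fin 2)).erase 1 = {0} := by decide
    rw [Fin.sum_univ_two, h0, h1, Finset.prod_singleton, Finset.prod_singleton]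
  constructor
  · intro h a ha b hb hab
    rcases hab.eq_or_lt with rfl | hlt
    · exact le_rfl
    have := h ![a, b] (by
      intro i j hij
      fin_cases i <;> fin_cases j <;> simp at hij ⊢ <;> linarith) (by
      intro i; fin_cases i <;> simpa)
    rw [key] at this
    simp only [Matrix.cons_val_zero, Matrix.cons_val_one] at this
    have h2 : f a / (a - b) + f b / (b - a) = (f b - f a) / (b - a) := by
      have : b - a ≠ 0 := by linarith
      have : a - b ≠ 0 := by intro h; apply this; linarith
      field_simp
      ring
    rw [h2] at this
    have h3 : 0 < b - a := by linarith
    rw [le_div_iff₀ h3] at this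
    linarith
  · intro h x hx hm
    change 0 ≤ ∑ i : Fin 2, _
    rw [key]
    have hne : x 0 ≠ x 1 := fun h => by simpa using hx h
    rcases lt_or_gt_of_ne hne with hl | hl
    · have := h (hm 0) (hm 1) hl.le
      have h2 : f (x 0) / (x 0 - x 1) + f (x 1) / (x 1 - x 0) = (f (x 1) - f (x 0)) / (x 1 - x 0) := by
        have : x 1 - x 0 ≠ 0 := by linarith
        have : x 0 - x 1 ≠ 0 := by intro h; apply this; linarith
        field_simp
        ring
      rw [h2]
      exact div_nonneg (by linarith) (by linarith)
    · have := h (hm 1) (hm 0) hl.le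
      have h2 : f (x 0) / (x 0 - x 1) + f (x 1) / (x 1 - x 0) = (f (x 0) - f (x 1)) / (x 0 - x 1) := by
        have : x 1 - x 0 ≠ 0 := by linarith
        have : x 0 - x 1 ≠ 0 := by intro h; apply this; linarith
        field_simp
        ring
      rw [h2]
      exact div_nonneg (by linarith) (by linarith)

lemma aux_symm1 (h : ℝ) (f : ℝ → ℝ) (x : ℝ) : symmDelta 1 h f x =
    if (x - h / 2 ∈ Icc (-1 : ℝ) 1 ∧ x + h / 2 ∈ Icc (-1 : ℝ) 1) then
      f (x + h / 2) - f (x - h / 2) else 0 := by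
  unfold symmDelta
  have e1 : x - h / 2 + h = x + h / 2 := by ring
  simp [Finset.sum_range_succ, e1]
  split_ifs <;> ring

lemma aux_rpow_up (r A u : ℝ) (hA : 0 < A) (h1 : A / 4 ≤ u) (h2 : u ≤ 4 * A) :
    u ^ r ≤ 4 ^ |r| * A ^ r := by
  have hu : 0 < u := by linarith
  rcases le_total 0 r with hr | hr
  · rw [abs_of_nonneg hr, ← Real.mul_rpow (by norm_num) hA.le]
    exact Real.rpow_le_rpow hu.le h2 hr
  · rw [abs_of_nonpos hr, Real.rpow_neg (by norm_num), ← Real.inv_rpow (by norm_num),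
      ← Real.mul_rpow (by norm_num) hA.le]
    exact Real.rpow_le_rpow_of_nonpos (by positivity) (by linarith) hr

lemma aux_rpow_lo (r A u : ℝ) (hA : 0 < A) (h1 : A / 4 ≤ u) (h2 : u ≤ 4 * A) :
    4 ^ (-|r|) * A ^ r ≤ u ^ r := by
  have hu : 0 < u := by linarith
  have := aux_rpow_up r u A hu (by linarith) (by linarith)
  rw [Real.rpow_neg (by norm_num), inv_mul_le_iff₀ (by positivity)]
  exact this

lemma aux_eLp_lower (g : ℝ → ℝ) (p : ℝ≥0∞) (hp : p ≠ 0) (a b A B m : ℝ) (hab : a < b)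
    (hA : A ≤ a) (hB : b ≤ B) (hm : 0 ≤ m) (h : ∀ x ∈ Icc a b, m ≤ |g x|) :
    ENNReal.ofReal (m * (b - a) ^ (1 / p.toReal)) ≤ LpOn g p A B := by
  unfold LpOn
  have h1 : eLpNorm (fun _ : ℝ => m) p (volume.restrict (Icc a b)) ≤
      eLpNorm g p (volume.restrict (Icc a b)) := by
    apply eLpNorm_mono_ae
    filter_upwards [ae_restrict_mem measurableSet_Icc] with x hx
    rw [Real.norm_eq_abs, Real.norm_eq_abs, abs_of_nonneg hm]
    exact h x hx
  have h2 : eLpNorm g p (volume.restrict (Icc a b)) ≤ eLpNorm g p (volume.restrict (Icc A B)) :=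
    eLpNorm_mono_measure _ (Measure.restrict_mono (Icc_subset_Icc hA hB) le_rfl)
  refine le_trans ?_ (h1.trans h2)
  have hv : volume.restrict (Icc a b) univ = ENNReal.ofReal (b - a) := by
    simp
  have hne : (volume.restrict (Icc a b) : Measure ℝ) ≠ 0 := by
    intro h0
    rw [h0] at hv
    simp at hv
    linarith
  rw [eLpNorm_const _ hp hne, hv, ENNReal.ofReal_mul hm, Real.enorm_eq_ofReal hm,
    ENNReal.ofReal_rpow_of_pos (by linarith)]

/-- pointwise weight lower bound on the left -/
lemma aux_w_lo (α β : ℝ) : ∃ c > 0, ∀ A x : ℝ, 0 < A → A / 4 ≤ 1 + x → 1 + x ≤ 4 * A → x ≤ 3 / 4 →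
    c * A ^ α ≤ jacobi α β x := by
  refine ⟨4 ^ (-|α|) * 4 ^ (-|β|), by positivity, fun A x hA h1 h2 h3 => ?_⟩
  have e1 := aux_rpow_lo α A (1 + x) hA h1 h2
  have e2 := aux_rpow_lo β 1 (1 - x) one_pos (by linarith) (by linarith)
  rw [Real.one_rpow, mul_one] at e2
  unfold jacobi
  calc _ = (4 ^ (-|α|) * A ^ α) * 4 ^ (-|β|) := by ring
    _ ≤ _ := by
      apply mul_le_mul e1 e2 (by positivity)
      exact Real.rpow_nonneg (by linarith) _

lemma aux_w_up (α β : ℝ) : ∃ c > 0, ∀ x : ℝ, -1 ≤ x → x ≤ 3 / 4 →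
    jacobi α β x ≤ c * (1 + x) ^ α := by
  refine ⟨4 ^ |β|, by positivity, fun x h2 h3 => ?_⟩
  have e2 := aux_rpow_up β 1 (1 - x) one_pos (by linarith) (by linarith)
  rw [Real.one_rpow, mul_one] at e2
  unfold jacobi
  rw [mul_comm]
  exact mul_le_mul_of_nonneg_right e2 (Real.rpow_nonneg (by linarith) _)

lemma aux_w_nonneg (α β x : ℝ) (h1 : -1 ≤ x) (h2 : x ≤ 1) : 0 ≤ jacobi α β x :=
  mul_nonneg (Real.rpow_nonneg (by linarith) _) (Real.rpow_nonneg (by linarith) _)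

lemma aux_ptwise (p : ℝ≥0∞) (hp : p ≠ 0) (α β : ℝ) : ∃ K > 0, ∀ f : ℝ → ℝ,
    MonotoneOn f (Ioo (-1 : ℝ) 1) → LpOn (fun x => jacobi α β x * f x) p (-1) 1 ≤ 1 →
    ∀ x, -1 < x → x ≤ 1 / 2 → |f x| ≤ K * (1 + x) ^ (-(α + 1 / p.toReal)) := by
  obtain ⟨c, hc, hw⟩ := aux_w_lo α β
  set s := 1 / p.toReal with hs
  refine ⟨(c * (1 / 8) ^ s)⁻¹, by positivity, fun f hf hL x hx1 hx2 => ?_⟩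
  have ht : 0 < 1 + x := by linarith
  have main : |f x| * (c * (1 + x) ^ α) * ((1 + x) / 8) ^ s ≤ 1 := by
    have gen : ∀ a b, a < b → b - a = (1 + x) / 8 → x - (1 + x) / 8 ≤ a → b ≤ x + (1 + x) / 8 →
        (∀ y ∈ Icc a b, |f x| ≤ |f y|) →
        |f x| * (c * (1 + x) ^ α) * ((1 + x) / 8) ^ s ≤ 1 := by
      intro a b hab hba ha hb hfy
      have := aux_eLp_lower (fun x => jacobi α β x * f x) p hp a b (-1) 1
        (|f x| * (c * (1 + x) ^ α)) hab (by linarith) (by linarith) (by positivity) (by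
          intro y hy
          have hwy := hw (1 + x) y ht (by linarith [hy.1]) (by linarith [hy.2]) (by linarith [hy.2])
          have hw0 : 0 ≤ c * (1 + x) ^ α := by positivity
          rw [abs_mul, abs_of_nonneg (hw0.trans hwy), mul_comm]
          exact mul_le_mul hwy (hfy y hy) (abs_nonneg _) (hw0.trans hwy))
      rw [hba] at this
      have := this.trans hL
      rwa [ENNReal.ofReal_le_one] at this
    have hxI : x ∈ Ioo (-1 : ℝ) 1 := ⟨hx1, by linarith⟩
    rcases le_total 0 (f x) with h0 | h0
    · refine gen x (x + (1 + x) / 8) (by linarith) (by ring) (by linarith) le_rfl ?_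
      intro y hy
      have := hf hxI ⟨by linarith [hy.1], by linarith [hy.2]⟩ hy.1
      rw [abs_of_nonneg h0, abs_of_nonneg (h0.trans this)]
      exact this
    · refine gen (x - (1 + x) / 8) x (by linarith) (by ring) le_rfl (by linarith) ?_
      intro y hy
      have := hf ⟨by linarith [hy.1], by linarith [hy.2]⟩ hxI hy.2
      rw [abs_of_nonpos h0, abs_of_nonpos (this.trans h0)]
      linarith
  have e1 : ((1 + x) / 8) ^ s = (1 / 8) ^ s * (1 + x) ^ s := by
    rw [← Real.mul_rpow (by norm_num) ht.le]; congr 1; ring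
  rw [e1] at main
  rw [Real.rpow_neg ht.le, Real.rpow_add ht, ← mul_inv, ← one_div, le_div_iff₀ (by positivity)]
  calc _ = _ := by ring
    _ ≤ _ := main

lemma aux_diff_int (f : ℝ → ℝ) (hf : MonotoneOn f (Ioo (-1 : ℝ) 1)) (a b H M : ℝ) (hab : a ≤ b)
    (hH : 0 ≤ H) (h1 : -1 < a - H) (h2 : b + H < 1)
    (hM : ∀ y ∈ Icc (a - H) (b + H), |f y| ≤ M) :
    IntegrableOn (fun x => f (x + H) - f (x - H)) (Icc a b) ∧
    ∫ x in Icc a b, (f (x + H) - f (x - H)) ≤ 4 * H * M := by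
  have hI : ∀ c d, a - H ≤ c → c ≤ b + H → a - H ≤ d → d ≤ b + H →
      IntervalIntegrable f volume c d := by
    intro c d hc hc' hd hd'
    apply MonotoneOn.intervalIntegrable
    apply hf.mono
    intro y hy
    rw [mem_uIcc] at hy
    rcases hy with hy | hy
    · exact ⟨by linarith [hy.1], by linarith [hy.2]⟩
    · exact ⟨by linarith [hy.1], by linarith [hy.2]⟩
  have i1 : IntervalIntegrable (fun x => f (x + H)) volume a b := by
    have := (hI (a + H) (b + H) (by linarith) (by linarith) (by linarith) (by linarith)).comp_add_right H
    simpa using this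
  have i2 : IntervalIntegrable (fun x => f (x - H)) volume a b := by
    have := (hI (a - H) (b - H) (by linarith) (by linarith) (by linarith) (by linarith)).comp_sub_right H
    simpa using this
  have hsub := i1.sub i2
  refine ⟨?_, ?_⟩
  · rw [integrableOn_Icc_iff_integrableOn_Ioc]
    exact (intervalIntegrable_iff_integrableOn_Ioc_of_le hab).1 hsub
  · rw [integral_Icc_eq_integral_Ioc, ← intervalIntegral.integral_of_le hab,
      intervalIntegral.integral_sub i1 i2, intervalIntegral.integral_comp_add_right,
      intervalIntegral.integral_comp_sub_right,
      intervalIntegral.integral_interval_sub_interval_comm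
        (hI _ _ (by linarith) (by linarith) (by linarith) (by linarith))
        (hI _ _ (by linarith) (by linarith) (by linarith) (by linarith))
        (hI _ _ (by linarith) (by linarith) (by linarith) (by linarith))]
    have n1 : ‖∫ x in (a + H)..(a - H), f x‖ ≤ M * |a - H - (a + H)| := by
      apply intervalIntegral.norm_integral_le_of_norm_le_const
      intro y hy
      rw [mem_uIoc] at hy
      apply hM
      rcases hy with hy | hy
      · exact ⟨by linarith [hy.1], by linarith [hy.2]⟩
      · exact ⟨by linarith [hy.1], by linarith [hy.2]⟩
    have n2 : ‖∫ x in (b + H)..(b - H), f x‖ ≤ M * |b - H - (b + H)| := by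
      apply intervalIntegral.norm_integral_le_of_norm_le_const
      intro y hy
      rw [mem_uIoc] at hy
      apply hM
      rcases hy with hy | hy
      · exact ⟨by linarith [hy.1], by linarith [hy.2]⟩
      · exact ⟨by linarith [hy.1], by linarith [hy.2]⟩
    have e1 : |a - H - (a + H)| = 2 * H := by
      rw [abs_of_nonpos (by linarith)]; ring
    have e2 : |b - H - (b + H)| = 2 * H := by
      rw [abs_of_nonpos (by linarith)]; ring
    rw [e1, Real.norm_eq_abs] at n1
    rw [e2, Real.norm_eq_abs] at n2
    have := abs_le.1 n1
    have := abs_le.1 n2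
    linarith

lemma aux_block (α β s Q K : ℝ) (hQ : 1 ≤ Q) (hK : 0 < K) : ∃ C > 0, ∀ f : ℝ → ℝ,
    MonotoneOn f (Ioo (-1 : ℝ) 1) →
    (∀ x, -1 < x → x ≤ 1 / 2 → |f x| ≤ K * (1 + x) ^ (-(α + s))) →
    ∀ h A b : ℝ, 0 < h → h < 1 / 4 → 2 * h ^ 2 ≤ A → A ≤ 1 + b → b ≤ 0 → 1 + b ≤ 2 * A →
    ∫⁻ x in Icc (-1 + A) b, ‖jacobi α β x * symmDelta 1 (h * phiW x) f x‖ₑ ^ Q ≤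
      ENNReal.ofReal (C * (h * A ^ (1 / 2 - s * Q))) := by
  obtain ⟨cw, hcw, hw⟩ := aux_w_up α β
  set W := cw * 4 ^ |α| with hW
  set K' := K * 4 ^ |(-(α + s))| with hK'
  have hW0 : 0 < W := by positivity
  have hK0 : 0 < K' := by positivity
  refine ⟨2 * (W * (2 * K')) ^ Q, by positivity, fun f hf hpt h A b hh0 hh hA hAb hb hbA => ?_⟩
  have hA0 : 0 < A := by nlinarith
  set H := h * Real.sqrt A with hHdef
  have hsA : Real.sqrt A ^ 2 = A := Real.sq_sqrt hA0.le
  have hsA0 : 0 < Real.sqrt A := Real.sqrt_pos.2 hA0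
  have hH0 : 0 < H := by positivity
  have hH1 : H ≤ 3 / 4 * A := by
    apply abs_le_of_sq_le_sq' _ (by positivity) |>.2
    rw [hHdef, mul_pow, hsA]
    nlinarith
  have hA1 : A ≤ 1 := by linarith
  have hH2 : H ≤ 1 / 4 := by
    have : Real.sqrt A ≤ 1 := by rw [Real.sqrt_le_left (by norm_num)]; linarith
    nlinarith
  set M := K' * A ^ (-(α + s)) with hM
  have hM0 : 0 < M := by positivity
  have hMb : ∀ y ∈ Icc (-1 + A - H) (b + H), |f y| ≤ M := by
    intro y hy
    refine (hpt y (by linarith [hy.1]) (by linarith [hy.2])).trans ?_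
    rw [hM, hK', mul_assoc]
    apply mul_le_mul_of_nonneg_left _ hK.le
    exact aux_rpow_up _ _ _ hA0 (by linarith [hy.1]) (by linarith [hy.2])
  obtain ⟨hint, hintle⟩ := aux_diff_int f hf (-1 + A) b H M (by linarith) hH0.le (by linarith)
    (by linarith) hMb
  set V := W * A ^ α with hV
  have hV0 : 0 < V := by positivity
  have hpw : ∀ x ∈ Icc (-1 + A) b, ‖jacobi α β x * symmDelta 1 (h * phiW x) f x‖ₑ ^ Q ≤
      ENNReal.ofReal (V ^ Q * (2 * M) ^ (Q - 1) * (f (x + H) - f (x - H))) := by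
    intro x hx
    have hx1 := hx.1
    have hx2 := hx.2
    have hw0 : 0 ≤ jacobi α β x := aux_w_nonneg _ _ _ (by linarith) (by linarith)
    have hwV : jacobi α β x ≤ V := by
      refine (hw x (by linarith) (by linarith)).trans ?_
      rw [hV, hW, mul_assoc]
      apply mul_le_mul_of_nonneg_left _ hcw.le
      exact aux_rpow_up _ _ _ hA0 (by linarith) (by linarith)
    have hphi0 : 0 ≤ phiW x := Real.sqrt_nonneg _
    have hphi : h * phiW x / 2 ≤ H := by
      have : phiW x ≤ 2 * Real.sqrt A := by
        unfold phiW
        rw [Real.sqrt_le_left (by positivity), mul_pow, hsA]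
        nlinarith
      rw [hHdef]
      nlinarith
    have hp0 : 0 ≤ h * phiW x / 2 := by positivity
    set u := h * phiW x / 2 with hu
    have mp : f (x + u) ≤ f (x + H) :=
      hf ⟨by linarith, by linarith⟩ ⟨by linarith, by linarith⟩ (by linarith)
    have mm : f (x - H) ≤ f (x - u) :=
      hf ⟨by linarith, by linarith⟩ ⟨by linarith, by linarith⟩ (by linarith)
    have m0 : f (x - u) ≤ f (x + u) :=
      hf ⟨by linarith, by linarith⟩ ⟨by linarith, by linarith⟩ (by linarith)
    set D := f (x + H) - f (x - H) with hD
    have hDel : |symmDelta 1 (h * phiW x) f x| ≤ D := by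
      rw [aux_symm1, ← hu]
      split_ifs
      · rw [abs_of_nonneg (by linarith)]; linarith
      · rw [abs_zero]; linarith
    have hD0 : 0 ≤ D := (abs_nonneg _).trans hDel
    have hD2 : D ≤ 2 * M := by
      have a1 := abs_le.1 (hMb (x + H) ⟨by linarith, by linarith⟩)
      have a2 := abs_le.1 (hMb (x - H) ⟨by linarith, by linarith⟩)
      linarith
    rw [Real.enorm_eq_ofReal_abs, ENNReal.ofReal_rpow_of_nonneg (abs_nonneg _) (by linarith)]
    apply ENNReal.ofReal_le_ofReal
    have e1 : |jacobi α β x * symmDelta 1 (h * phiW x) f x| ≤ V * D := by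
      rw [abs_mul, abs_of_nonneg hw0]
      exact mul_le_mul hwV hDel (abs_nonneg _) hV0.le
    refine (Real.rpow_le_rpow (abs_nonneg _) e1 (by linarith)).trans ?_
    rw [Real.mul_rpow hV0.le hD0, mul_assoc]
    apply mul_le_mul_of_nonneg_left _ (by positivity)
    rcases hD0.eq_or_lt with h0 | h0
    · rw [← h0, Real.zero_rpow (by linarith)]; simp
    · have : D ^ Q = D ^ (Q - 1) * D := by
        rw [← Real.rpow_add_one h0.ne']; congr 1; ring
      rw [this]
      apply mul_le_mul_of_nonneg_right _ hD0
      exact Real.rpow_le_rpow hD0 hD2 (by linarith)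
  refine (setLIntegral_mono' measurableSet_Icc hpw).trans ?_
  rw [← ofReal_integral_eq_lintegral_ofReal (hint.const_mul _)]
  · apply ENNReal.ofReal_le_ofReal
    rw [integral_const_mul]
    refine (mul_le_mul_of_nonneg_left hintle (by positivity)).trans (le_of_eq ?_)
    have e1 : (2 * M) ^ (Q - 1) * (2 * M) = (2 * M) ^ Q := by
      rw [← Real.rpow_add_one (by positivity)]; congr 1; ring
    have e2 : V ^ Q * (2 * M) ^ Q = (W * (2 * K')) ^ Q * A ^ (-(s * Q)) := by
      rw [← Real.mul_rpow hV0.le (by positivity)]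
      have : V * (2 * M) = (W * (2 * K')) * A ^ (-s) := by
        rw [hV, hM]
        have : A ^ (-s) = A ^ α * A ^ (-(α + s)) := by
          rw [← Real.rpow_add hA0]; congr 1; ring
        rw [this]; ring
      rw [this, Real.mul_rpow (by positivity) (by positivity), ← Real.rpow_mul hA0.le]
      congr 2; ring
    have e3 : A ^ (1 / 2 - s * Q) = Real.sqrt A * A ^ (-(s * Q)) := by
      rw [Real.sqrt_eq_rpow, ← Real.rpow_add hA0]; congr 1
    calc _ = 2 * (V ^ Q * ((2 * M) ^ (Q - 1) * (2 * M))) * H := by ring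
      _ = _ := by rw [e1, e2, e3, hHdef]; ring
  · filter_upwards [ae_restrict_mem measurableSet_Icc] with x hx
    have : f (x - H) ≤ f (x + H) :=
      hf ⟨by linarith [hx.1], by linarith [hx.2]⟩ ⟨by linarith [hx.1], by linarith [hx.2]⟩
        (by linarith)
    have : 0 ≤ f (x + H) - f (x - H) := by linarith
    simp only [Pi.zero_apply]
    positivity

lemma aux_sum (F : ℝ → ℝ≥0∞) (S : Set ℝ) (B : ℕ → Set ℝ) (hS : S ⊆ ⋃ j, B j) (X ρ : ℝ) (hX : 0 ≤ X)
    (hρ0 : 0 ≤ ρ) (hρ : ρ < 1)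
    (hB : ∀ j, ∫⁻ x in B j, F x ≤ ENNReal.ofReal (X * ρ ^ j)) :
    ∫⁻ x in S, F x ≤ ENNReal.ofReal (X * (1 - ρ)⁻¹) := by
  calc _ ≤ ∫⁻ x in ⋃ j, B j, F x := lintegral_mono_set hS
    _ ≤ ∑' j, ∫⁻ x in B j, F x := lintegral_iUnion_le _ _
    _ ≤ ∑' j, ENNReal.ofReal (X * ρ ^ j) := ENNReal.tsum_le_tsum hB
    _ = ENNReal.ofReal (∑' j, X * ρ ^ j) := by
      rw [ENNReal.ofReal_tsum_of_nonneg]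
      · intro n; positivity
      · exact (summable_geometric_of_lt_one hρ0 hρ).mul_left X
    _ = _ := by rw [tsum_mul_left, tsum_geometric_of_lt_one hρ0 hρ]

lemma aux_half (α β s Q K κ : ℝ) (hQ : 1 ≤ Q) (hK : 0 < K)
    (hκ : (0 < 1 / 2 - s * Q ∧ κ = 1) ∨ (1 / 2 - s * Q < 0 ∧ κ = 2 - 2 * (s * Q))) :
    ∃ C > 0, ∀ f : ℝ → ℝ,
    MonotoneOn f (Ioo (-1 : ℝ) 1) →
    (∀ x, -1 < x → x ≤ 1 / 2 → |f x| ≤ K * (1 + x) ^ (-(α + s))) →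
    ∀ h : ℝ, 0 < h → h < 1 / 4 →
    ∫⁻ x in Icc (-1 + 2 * h ^ 2) 0, ‖jacobi α β x * symmDelta 1 (h * phiW x) f x‖ₑ ^ Q ≤
      ENNReal.ofReal (C * h ^ κ) := by
  obtain ⟨C, hC, hblock⟩ := aux_block α β s Q K hQ hK
  set e := 1 / 2 - s * Q with he
  rcases hκ with ⟨he0, rfl⟩ | ⟨he0, rfl⟩
  · have hρ0 : (0 : ℝ) ≤ (1 / 2) ^ e := by positivity
    have hρ1 : (1 / 2 : ℝ) ^ e < 1 := Real.rpow_lt_one (by norm_num) (by norm_num) he0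
    refine ⟨C * (1 - (1 / 2 : ℝ) ^ e)⁻¹, mul_pos hC (inv_pos.2 (by linarith)),
      fun f hf hpt h hh0 hh => ?_⟩
    have := aux_sum (fun x => ‖jacobi α β x * symmDelta 1 (h * phiW x) f x‖ₑ ^ Q)
      (Icc (-1 + 2 * h ^ 2) 0)
      (fun j => Icc (-1 + max ((1 / 2) ^ (j + 1)) (2 * h ^ 2)) (-1 + (1 / 2) ^ j))
      (by
        intro x hx
        have h2 : 0 < h ^ 2 := by positivity
        obtain ⟨n, hn1, hn2⟩ := exists_nat_pow_near_of_lt_one (x := 1 + x) (y := (1 / 2 : ℝ))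
          (by linarith [hx.1]) (by linarith [hx.2]) (by norm_num) (by norm_num)
        rw [mem_iUnion]
        refine ⟨n, ?_, by linarith⟩
        rw [← le_sub_iff_add_le']
        apply max_le
        · linarith
        · linarith [hx.1])
      (C * h) ((1 / 2) ^ e) (by positivity) hρ0 hρ1 (by
        intro j
        rcases le_or_gt (max ((1 / 2) ^ (j + 1)) (2 * h ^ 2)) (1 + (-1 + (1 / 2 : ℝ) ^ j)) with hle | hgt
        · refine (hblock f hf hpt h _ _ hh0 hh (le_max_right _ _) hle ?_ ?_).trans ?_
          · have : (1 / 2 : ℝ) ^ j ≤ 1 := pow_le_one₀ (by norm_num) (by norm_num)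
            linarith
          · have := le_max_left ((1 / 2 : ℝ) ^ (j + 1)) (2 * h ^ 2)
            have e1 : (1 / 2 : ℝ) ^ (j + 1) = (1 / 2) ^ j * (1 / 2) := pow_succ _ _
            linarith
          · apply ENNReal.ofReal_le_ofReal
            rw [← mul_assoc]
            apply mul_le_mul_of_nonneg_left _ (by positivity)
            rw [← Real.rpow_natCast ((1 / 2 : ℝ) ^ e), ← Real.rpow_mul (by norm_num), mul_comm e,
              Real.rpow_mul (by norm_num), Real.rpow_natCast]
            apply Real.rpow_le_rpow _ _ he0.le
            · positivity
            · linarith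
        · rw [Icc_eq_empty (by linarith)]
          simp)
    refine this.trans (le_of_eq ?_)
    rw [Real.rpow_one]
    congr 1
    ring
  · have hρ0 : (0 : ℝ) ≤ 2 ^ e := by positivity
    have hρ1 : (2 : ℝ) ^ e < 1 := Real.rpow_lt_one_of_one_lt_of_neg (by norm_num) he0
    refine ⟨C * 2 ^ e * (1 - (2 : ℝ) ^ e)⁻¹, mul_pos (by positivity) (inv_pos.2 (by linarith)),
      fun f hf hpt h hh0 hh => ?_⟩
    have h2 : 0 < h ^ 2 := by positivity
    have := aux_sum (fun x => ‖jacobi α β x * symmDelta 1 (h * phiW x) f x‖ₑ ^ Q)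
      (Icc (-1 + 2 * h ^ 2) 0)
      (fun j => Icc (-1 + 2 * h ^ 2 * 2 ^ j) (min (-1 + 2 * h ^ 2 * 2 ^ (j + 1)) 0))
      (by
        intro x hx
        obtain ⟨n, hn1, hn2⟩ := exists_nat_pow_near (x := (1 + x) / (2 * h ^ 2)) (y := (2 : ℝ))
          (by rw [one_le_div (by positivity)]; linarith [hx.1]) (by norm_num)
        rw [mem_iUnion]
        rw [le_div_iff₀ (by positivity)] at hn1
        rw [div_lt_iff₀ (by positivity)] at hn2
        refine ⟨n, by linarith, ?_⟩
        apply le_min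
        · linarith
        · linarith [hx.2])
      (C * (h * (2 * h ^ 2) ^ e)) (2 ^ e) (by positivity) hρ0 hρ1 (by
        intro j
        rcases le_or_gt (2 * h ^ 2 * 2 ^ j) (1 + min (-1 + 2 * h ^ 2 * 2 ^ (j + 1)) 0) with hle | hgt
        · refine (hblock f hf hpt h _ _ hh0 hh ?_ hle (min_le_right _ _) ?_).trans ?_
          · have : (1 : ℝ) ≤ 2 ^ j := one_le_pow₀ (by norm_num)
            nlinarith
          · have := min_le_left (-1 + 2 * h ^ 2 * 2 ^ (j + 1)) 0
            have e1 : (2 : ℝ) ^ (j + 1) = 2 ^ j * 2 := pow_succ _ _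
            rw [e1] at this ⊢
            linarith
          · apply ENNReal.ofReal_le_ofReal
            rw [Real.mul_rpow (by positivity) (by positivity), ← Real.rpow_natCast ((2 : ℝ) ^ e),
              ← Real.rpow_mul (by norm_num), mul_comm e, Real.rpow_mul (by norm_num),
              Real.rpow_natCast]
            apply le_of_eq
            ring
        · rw [Icc_eq_empty (by linarith)]
          simp)
    refine this.trans (le_of_eq ?_)
    have e1 : h ^ (2 - 2 * (s * Q)) = h * (h ^ 2) ^ e := by
      rw [← Real.rpow_natCast h 2, ← Real.rpow_mul hh0.le]
      nth_rewrite 2 [← Real.rpow_one h]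
      rw [← Real.rpow_add hh0]
      congr 1
      rw [he]; push_cast; ring
    rw [e1, Real.mul_rpow (by norm_num) (by positivity)]
    congr 1
    ring

lemma aux_lint (r u : ℝ) (hr : -1 < r) (hu : 0 < u) :
    ∫⁻ x in Icc (-1 : ℝ) (-1 + u), ENNReal.ofReal ((1 + x) ^ r) =
      ENNReal.ofReal (u ^ (r + 1) / (r + 1)) := by
  have hint : IntervalIntegrable (fun x : ℝ => (1 + x) ^ r) volume (-1) (-1 + u) := by
    have := (intervalIntegral.intervalIntegrable_rpow' (a := 0) (b := u) hr).comp_add_left 1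
    have e0 : (0 : ℝ) - 1 = -1 := by ring
    have e1 : u - 1 = -1 + u := by ring
    rw [e0, e1] at this
    exact this
  rw [← ofReal_integral_eq_lintegral_ofReal]
  · rw [integral_Icc_eq_integral_Ioc, ← intervalIntegral.integral_of_le (by linarith),
      intervalIntegral.integral_comp_add_left (fun x => x ^ r) 1]
    have e1 : (1 : ℝ) + (-1 + u) = u := by ring
    have e0 : (1 : ℝ) + -1 = 0 := by ring
    rw [e0, e1, integral_rpow (Or.inl hr), Real.zero_rpow (by linarith), sub_zero]
  · change IntegrableOn _ _ _
    rw [integrableOn_Icc_iff_integrableOn_Ioc]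
    exact (intervalIntegrable_iff_integrableOn_Ioc_of_le (by linarith)).1 hint
  · filter_upwards [ae_restrict_mem measurableSet_Icc] with x hx
    exact Real.rpow_nonneg (by linarith [hx.1]) _

lemma aux_fwd (α β s Q K : ℝ) (hQ : 1 ≤ Q) (hK : 0 < K) (hs : 0 ≤ s) (hsQ : s * Q < 1)
    (hα : 0 ≤ α + s) : ∃ C > 0, ∀ f : ℝ → ℝ,
    (∀ x, -1 < x → x ≤ 1 / 2 → |f x| ≤ K * (1 + x) ^ (-(α + s))) →
    ∀ δ h : ℝ, 0 < δ → δ < 1 / 4 → 0 < h → h ≤ 2 * δ ^ 2 →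
    ∫⁻ x in Icc (-1) (-1 + 2 * δ ^ 2), ‖jacobi α β x * symmDelta 1 h f (x + h / 2)‖ₑ ^ Q ≤
      ENNReal.ofReal (C * δ ^ (2 - 2 * (s * Q))) := by
  obtain ⟨cw, hcw, hw⟩ := aux_w_up α β
  have h1s : 0 < -(s * Q) + 1 := by linarith
  refine ⟨(cw * (2 * K)) ^ Q * (2 ^ (-(s * Q) + 1) / (-(s * Q) + 1)), by positivity,
    fun f hpt δ h hδ0 hδ hh0 hh => ?_⟩
  have hδ2 : 2 * δ ^ 2 ≤ 1 / 8 := by nlinarith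
  have hpw : ∀ᵐ x ∂(volume.restrict (Icc (-1 : ℝ) (-1 + 2 * δ ^ 2))),
      ‖jacobi α β x * symmDelta 1 h f (x + h / 2)‖ₑ ^ Q ≤
      ENNReal.ofReal ((cw * (2 * K)) ^ Q) * ENNReal.ofReal ((1 + x) ^ (-(s * Q))) := by
    rw [← restrict_Ioc_eq_restrict_Icc]
    filter_upwards [ae_restrict_mem measurableSet_Ioc] with x hx
    have hx1 := hx.1
    have hx2 := hx.2
    have ht : 0 < 1 + x := by linarith
    have hw0 : 0 ≤ jacobi α β x := aux_w_nonneg _ _ _ (by linarith) (by linarith)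
    have hwV := hw x (by linarith) (by linarith)
    have hD : |symmDelta 1 h f (x + h / 2)| ≤ 2 * K * (1 + x) ^ (-(α + s)) := by
      rw [aux_symm1]
      split_ifs
      · have e1 : x + h / 2 - h / 2 = x := by ring
        have e2 : x + h / 2 + h / 2 = x + h := by ring
        rw [e1, e2]
        have a1 := hpt x hx1 (by linarith)
        have a2 := hpt (x + h) (by linarith) (by linarith)
        have a3 : (1 + (x + h)) ^ (-(α + s)) ≤ (1 + x) ^ (-(α + s)) :=
          Real.rpow_le_rpow_of_nonpos ht (by linarith) (by linarith)
        have a4 := mul_le_mul_of_nonneg_left a3 hK.le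
        have := abs_sub (f (x + h)) (f x)
        linarith
      · rw [abs_zero]; positivity
    rw [Real.enorm_eq_ofReal_abs, ENNReal.ofReal_rpow_of_nonneg (abs_nonneg _) (by linarith),
      ← ENNReal.ofReal_mul (by positivity)]
    apply ENNReal.ofReal_le_ofReal
    have e1 : |jacobi α β x * symmDelta 1 h f (x + h / 2)| ≤ (cw * (2 * K)) * (1 + x) ^ (-s) := by
      rw [abs_mul, abs_of_nonneg hw0]
      refine (mul_le_mul hwV hD (abs_nonneg _) (by positivity)).trans (le_of_eq ?_)
      have : (1 + x) ^ (-s) = (1 + x) ^ α * (1 + x) ^ (-(α + s)) := by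
        rw [← Real.rpow_add ht]; congr 1; ring
      rw [this]; ring
    refine (Real.rpow_le_rpow (abs_nonneg _) e1 (by linarith)).trans (le_of_eq ?_)
    rw [Real.mul_rpow (by positivity) (by positivity), ← Real.rpow_mul ht.le]
    congr 2; ring
  refine (lintegral_mono_ae hpw).trans ?_
  rw [lintegral_const_mul' _ _ ENNReal.ofReal_ne_top, aux_lint _ _ (by linarith) (by positivity),
    ← ENNReal.ofReal_mul (by positivity)]
  apply ENNReal.ofReal_le_ofReal
  apply le_of_eq
  rw [Real.mul_rpow (x := 2) (y := δ ^ 2) (by norm_num) (by positivity)]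
  have : δ ^ (2 - 2 * (s * Q)) = (δ ^ 2) ^ (-(s * Q) + 1) := by
    rw [← Real.rpow_natCast δ 2, ← Real.rpow_mul hδ0.le]
    congr 1
    push_cast; ring
  rw [this]
  ring

lemma aux_LpOn_le (g : ℝ → ℝ) (q : ℝ≥0∞) (hq : 1 ≤ q) (hqt : q ≠ ⊤) (a b C δ κ : ℝ) (hC : 0 < C)
    (hδ : 0 < δ)
    (h : ∫⁻ x in Icc a b, ‖g x‖ₑ ^ q.toReal ≤ ENNReal.ofReal (C * δ ^ (κ * q.toReal))) :
    LpOn g q a b ≤ ENNReal.ofReal (C ^ (1 / q.toReal) * δ ^ κ) := by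
  have hq0 : q ≠ 0 := (lt_of_lt_of_le one_pos hq).ne'
  have hQ : 0 < q.toReal := ENNReal.toReal_pos hq0 hqt
  unfold LpOn
  rw [eLpNorm_eq_lintegral_rpow_enorm_toReal hq0 hqt]
  refine (ENNReal.rpow_le_rpow h (by positivity)).trans (le_of_eq ?_)
  rw [ENNReal.ofReal_rpow_of_pos (by positivity), Real.mul_rpow hC.le (by positivity),
    ← Real.rpow_mul hδ.le]
  congr 3
  field_simp

lemma aux_refl_lint (F : ℝ → ℝ≥0∞) (a b : ℝ) :
    ∫⁻ x in Icc a b, F x = ∫⁻ x in Icc (-b) (-a), F (-x) := by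
  have := (Measure.measurePreserving_neg (volume : Measure ℝ)).setLIntegral_comp_preimage_emb
    (MeasurableEquiv.neg ℝ).measurableEmbedding F (Icc a b)
  rw [← this]
  simp

lemma aux_refl_w (α β x : ℝ) : jacobi α β (-x) = jacobi β α x := by
  unfold jacobi
  rw [mul_comm]; congr 2 <;> ring

lemma aux_refl_phi (x : ℝ) : phiW (-x) = phiW x := by
  unfold phiW; rw [neg_sq]

lemma aux_refl_symm (h : ℝ) (f : ℝ → ℝ) (x : ℝ) :
    symmDelta 1 h f (-x) = symmDelta 1 h (fun y => -f (-y)) x := by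
  rw [aux_symm1, aux_symm1]
  have e1 : -(x + h / 2) = -x - h / 2 := by ring
  have e2 : -(x - h / 2) = -x + h / 2 := by ring
  have : (-x - h / 2 ∈ Icc (-1 : ℝ) 1 ∧ -x + h / 2 ∈ Icc (-1 : ℝ) 1) ↔
      (x - h / 2 ∈ Icc (-1 : ℝ) 1 ∧ x + h / 2 ∈ Icc (-1 : ℝ) 1) := by
    simp only [mem_Icc]
    constructor <;> rintro ⟨⟨_, _⟩, _, _⟩ <;> refine ⟨⟨?_, ?_⟩, ?_, ?_⟩ <;> linarith
  simp only [this, e1, e2]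
  split_ifs <;> ring

lemma aux_refl_LpOn (g : ℝ → ℝ) (p : ℝ≥0∞) (a b : ℝ) :
    LpOn g p a b = LpOn (fun x => g (-x)) p (-b) (-a) := by
  unfold LpOn
  have h := (Measure.measurePreserving_neg (volume : Measure ℝ)).restrict_preimage_emb
    (MeasurableEquiv.neg ℝ).measurableEmbedding (Icc a b)
  have e : (Neg.neg ⁻¹' Icc a b : Set ℝ) = Icc (-b) (-a) := by simp
  rw [e] at h
  have := (MeasurableEquiv.neg ℝ).measurableEmbedding.eLpNorm_map_measure (p := p) (g := g)
    (μ := volume.restrict (Icc (-b) (-a)))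
  have e2 : ((MeasurableEquiv.neg ℝ : ℝ ≃ᵐ ℝ) : ℝ → ℝ) = Neg.neg := rfl
  rw [e2, h.map_eq] at this
  rw [this]
  rfl

lemma aux_upper (q p : ℝ≥0∞) (hq : 1 ≤ q) (hqt : q ≠ ⊤) (hp : p ≠ 0) (α β κ : ℝ)
    (hsQ : 1 / p.toReal * q.toReal < 1)
    (hα : 0 ≤ α + 1 / p.toReal) (hβ : 0 ≤ β + 1 / p.toReal)
    (hκ : (0 < 1 / 2 - 1 / p.toReal * q.toReal ∧ κ * q.toReal = 1) ∨
      (1 / 2 - 1 / p.toReal * q.toReal < 0 ∧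
        κ * q.toReal = 2 - 2 * (1 / p.toReal * q.toReal))) :
    ∃ C > 0, ∀ f : ℝ → ℝ, MonotoneOn f (Ioo (-1 : ℝ) 1) →
      LpOn (fun x => jacobi α β x * f x) p (-1) 1 ≤ 1 →
      ∀ δ : ℝ, 0 < δ → δ < 1 / 4 →
        omegaDT 1 f δ (jacobi α β) q ≤ ENNReal.ofReal (C * δ ^ κ) := by
  set s := 1 / p.toReal with hs
  set Q := q.toReal with hQdef
  have hs0 : 0 ≤ s := by positivity
  have hQ : 1 ≤ Q := by
    rw [hQdef, ← ENNReal.toReal_one]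
    exact ENNReal.toReal_mono hqt hq
  have hκ0 : 0 < κ * Q := by
    rcases hκ with h | h
    · rw [h.2]; norm_num
    · rw [h.2]; linarith
  have hκ1 : κ * Q ≤ 2 - 2 * (s * Q) := by
    rcases hκ with h | h
    · rw [h.2]; linarith
    · rw [h.2]
  obtain ⟨K1, hK1, hpt1⟩ := aux_ptwise p hp α β
  obtain ⟨K2, hK2, hpt2⟩ := aux_ptwise p hp β α
  obtain ⟨C1, hC1, hh1⟩ := aux_half α β s Q K1 (κ * Q) hQ hK1 hκ
  obtain ⟨C2, hC2, hh2⟩ := aux_half β α s Q K2 (κ * Q) hQ hK2 hκ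
  obtain ⟨C3, hC3, hf1⟩ := aux_fwd α β s Q K1 hQ hK1 hs0 hsQ hα
  obtain ⟨C4, hC4, hf2⟩ := aux_fwd β α s Q K2 hQ hK2 hs0 hsQ hβ
  refine ⟨(C1 + C2) ^ (1 / Q) + C3 ^ (1 / Q) + C4 ^ (1 / Q), by positivity,
    fun f hf hL δ hδ0 hδ => ?_⟩
  set g : ℝ → ℝ := fun x => -f (-x) with hg
  have hgm : MonotoneOn g (Ioo (-1 : ℝ) 1) := by
    intro a ha b hb hab
    have := hf (a := -b) (b := -a) ⟨by linarith [hb.2], by linarith [hb.1]⟩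
      ⟨by linarith [ha.2], by linarith [ha.1]⟩ (by linarith)
    simp only [hg]
    linarith
  have hgL : LpOn (fun x => jacobi β α x * g x) p (-1) 1 ≤ 1 := by
    rw [aux_refl_LpOn] at hL
    refine le_trans (le_of_eq ?_) hL
    rw [neg_neg]
    unfold LpOn
    rw [← eLpNorm_neg]
    congr 1
    funext x
    simp only [Pi.neg_apply, hg, aux_refl_w]
    ring
  have pf := hpt1 f hf hL
  have pg := hpt2 g hgm hgL
  have hmain : OmegaMain 1 f δ (jacobi α β) q ≤ ENNReal.ofReal ((C1 + C2) ^ (1 / Q) * δ ^ κ) := by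
    unfold OmegaMain
    refine iSup₂_le fun h hh => ?_
    have hh0 : 0 < h := hh.1
    have hhd : h ≤ δ := hh.2
    apply aux_LpOn_le _ q hq hqt _ _ _ _ _ (by positivity) hδ0
    have hmonoh : h ^ (κ * Q) ≤ δ ^ (κ * Q) := Real.rpow_le_rpow hh0.le hhd hκ0.le
    have b1 := hh1 f hf pf h hh0 (by linarith)
    have b2 := hh2 g hgm pg h hh0 (by linarith)
    have e1 : ∫⁻ x in Icc 0 (1 - 2 * h ^ 2),
        ‖jacobi α β x * symmDelta 1 (h * phiW x) f x‖ₑ ^ Q =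
        ∫⁻ x in Icc (-1 + 2 * h ^ 2) 0, ‖jacobi β α x * symmDelta 1 (h * phiW x) g x‖ₑ ^ Q := by
      rw [aux_refl_lint]
      have : -(1 - 2 * h ^ 2) = -1 + 2 * h ^ 2 := by ring
      rw [this, neg_zero]
      simp only [aux_refl_w, aux_refl_phi, aux_refl_symm, hg]
    have hsub : Icc (-1 + 2 * ((1 : ℕ) : ℝ) ^ 2 * h ^ 2) (1 - 2 * ((1 : ℕ) : ℝ) ^ 2 * h ^ 2) ⊆
        Icc (-1 + 2 * h ^ 2) 0 ∪ Icc 0 (1 - 2 * h ^ 2) := by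
      intro x hx
      simp only [Nat.cast_one, one_pow, mul_one] at hx
      rcases le_total x 0 with h0 | h0
      · exact Or.inl ⟨hx.1, h0⟩
      · exact Or.inr ⟨h0, hx.2⟩
    refine (lintegral_mono_set hsub).trans ((lintegral_union_le _ _ _).trans ?_)
    rw [e1]
    refine (add_le_add b1 b2).trans ?_
    rw [← ENNReal.ofReal_add (by positivity) (by positivity), ← add_mul]
    apply ENNReal.ofReal_le_ofReal
    exact mul_le_mul_of_nonneg_left hmonoh (by positivity)
  have hdd : δ ^ (2 - 2 * (s * Q)) ≤ δ ^ (κ * Q) :=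
    Real.rpow_le_rpow_of_exponent_ge hδ0 (by linarith) hκ1
  have hfwd : OmegaFwd 1 f δ (jacobi α β) q ≤ ENNReal.ofReal (C3 ^ (1 / Q) * δ ^ κ) := by
    unfold OmegaFwd
    refine iSup₂_le fun h hh => ?_
    simp only [Nat.cast_one, one_pow, mul_one, one_mul] at hh ⊢
    apply aux_LpOn_le _ q hq hqt _ _ _ _ _ hC3 hδ0
    refine (hf1 f pf δ h hδ0 hδ hh.1 hh.2).trans ?_
    apply ENNReal.ofReal_le_ofReal
    exact mul_le_mul_of_nonneg_left hdd hC3.le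
  have hbwd : OmegaBwd 1 f δ (jacobi α β) q ≤ ENNReal.ofReal (C4 ^ (1 / Q) * δ ^ κ) := by
    unfold OmegaBwd
    refine iSup₂_le fun h hh => ?_
    simp only [Nat.cast_one, one_pow, mul_one, one_mul] at hh ⊢
    apply aux_LpOn_le _ q hq hqt _ _ _ _ _ hC4 hδ0
    have b2 := hf2 g pg δ h hδ0 hδ hh.1 hh.2
    rw [aux_refl_lint]
    have : -(1 - 2 * δ ^ 2) = -1 + 2 * δ ^ 2 := by ring
    rw [this]
    have e3 : ∀ x : ℝ, -x - h / 2 = -(x + h / 2) := fun x => by ring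
    simp only [aux_refl_w, e3, aux_refl_symm]
    refine b2.trans ?_
    apply ENNReal.ofReal_le_ofReal
    exact mul_le_mul_of_nonneg_left hdd hC4.le
  unfold omegaDT
  refine (add_le_add (add_le_add hmain hfwd) hbwd).trans ?_
  rw [← ENNReal.ofReal_add (by positivity) (by positivity),
    ← ENNReal.ofReal_add (by positivity) (by positivity), ← add_mul, ← add_mul]

/-- step function -/
def auxStep (u c : ℝ) (x : ℝ) : ℝ := if x < -1 + u then -c else 0

lemma aux_step_norm (p : ℝ≥0∞) (hp : p ≠ 0) (α β : ℝ) (hα : α ∈ Jset p) : ∃ C > 0,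
    ∀ u : ℝ, 0 < u → u ≤ 1 →
      LpOn (fun x => jacobi α β x * auxStep u 1 x) p (-1) 1 ≤
        ENNReal.ofReal (C * u ^ (α + 1 / p.toReal)) := by
  obtain ⟨cw, hcw, hw⟩ := aux_w_up α β
  by_cases hpt : p = ⊤
  · subst hpt
    have hα0 : 0 ≤ α := by simpa [Jset] using hα
    refine ⟨cw, hcw, fun u hu hu1 => ?_⟩
    unfold LpOn
    rw [eLpNorm_exponent_top]
    apply eLpNormEssSup_le_of_ae_bound
    filter_upwards [ae_restrict_mem measurableSet_Icc] with x hx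
    simp only [ENNReal.toReal_top, div_zero, add_zero]
    unfold auxStep
    split_ifs with hxu
    · have hw0 : 0 ≤ jacobi α β x := aux_w_nonneg _ _ _ hx.1 hx.2
      rw [Real.norm_eq_abs, abs_mul, abs_neg, abs_one, mul_one, abs_of_nonneg hw0]
      refine (hw x hx.1 (by linarith)).trans ?_
      exact mul_le_mul_of_nonneg_left (Real.rpow_le_rpow (by linarith [hx.1]) (by linarith) hα0) hcw.le
    · simp; positivity
  · have hP : 0 < p.toReal := ENNReal.toReal_pos hp hpt
    have hα0 : -1 / p.toReal < α := by simpa [Jset, hpt] using hα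
    set P := p.toReal with hPdef
    have hαP : -1 < α * P := by rwa [div_lt_iff₀ hP] at hα0
    have hαP' : 0 < α * P + 1 := by linarith
    refine ⟨(cw ^ P / (α * P + 1)) ^ (1 / P), by positivity, fun u hu hu1 => ?_⟩
    unfold LpOn
    rw [eLpNorm_eq_lintegral_rpow_enorm_toReal hp hpt, ← hPdef]
    have key : ∫⁻ x in Icc (-1 : ℝ) 1, ‖jacobi α β x * auxStep u 1 x‖ₑ ^ P ≤
        ENNReal.ofReal (cw ^ P / (α * P + 1) * u ^ (α * P + 1)) := by
      have hsub : Icc (-1 : ℝ) 1 ⊆ Icc (-1) (-1 + u) ∪ Icc (-1 + u) 1 := by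
        intro x hx
        rcases le_total x (-1 + u) with h0 | h0
        · exact Or.inl ⟨hx.1, h0⟩
        · exact Or.inr ⟨h0, hx.2⟩
      refine (lintegral_mono_set hsub).trans ((lintegral_union_le _ _ _).trans ?_)
      have z : ∫⁻ x in Icc (-1 + u) 1, ‖jacobi α β x * auxStep u 1 x‖ₑ ^ P = 0 := by
        rw [setLIntegral_congr_fun measurableSet_Icc (g := fun _ => 0)]
        · simp
        · intro x hx
          have : ¬ (x < -1 + u) := not_lt.2 hx.1
          simp [auxStep, this, hP]
      rw [z, add_zero]
      have hpw : ∀ x ∈ Icc (-1 : ℝ) (-1 + u), ‖jacobi α β x * auxStep u 1 x‖ₑ ^ P ≤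
          ENNReal.ofReal (cw ^ P) * ENNReal.ofReal ((1 + x) ^ (α * P)) := by
        intro x hx
        have hx1 := hx.1
        have hx2 := hx.2
        have hw0 : 0 ≤ jacobi α β x := aux_w_nonneg _ _ _ hx.1 (by linarith)
        have e : |jacobi α β x * auxStep u 1 x| ≤ cw * (1 + x) ^ α := by
          refine le_trans ?_ (hw x hx.1 (by linarith))
          rw [abs_mul, abs_of_nonneg hw0]
          unfold auxStep
          split_ifs
          · simp
          · simpa using hw0
        rw [Real.enorm_eq_ofReal_abs, ENNReal.ofReal_rpow_of_nonneg (abs_nonneg _) hP.le,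
          ← ENNReal.ofReal_mul (by positivity)]
        apply ENNReal.ofReal_le_ofReal
        refine (Real.rpow_le_rpow (abs_nonneg _) e hP.le).trans (le_of_eq ?_)
        have : 0 ≤ 1 + x := by linarith
        rw [Real.mul_rpow hcw.le (by positivity), ← Real.rpow_mul this]
      refine (setLIntegral_mono' measurableSet_Icc hpw).trans ?_
      rw [lintegral_const_mul' _ _ ENNReal.ofReal_ne_top, aux_lint _ _ hαP hu,
        ← ENNReal.ofReal_mul (by positivity)]
      apply ENNReal.ofReal_le_ofReal
      apply le_of_eq
      ring
    refine (ENNReal.rpow_le_rpow key (by positivity)).trans (le_of_eq ?_)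
    rw [ENNReal.ofReal_rpow_of_pos (by positivity), Real.mul_rpow (by positivity) (by positivity),
      ← Real.rpow_mul hu.le]
    congr 3
    field_simp

lemma aux_step_mem (p : ℝ≥0∞) (hp : p ≠ 0) (α β : ℝ) (hα : α ∈ Jset p) : ∃ c₀ > 0,
    ∀ u : ℝ, 0 < u → u ≤ 1 → ∃ c, c₀ * u ^ (-(α + 1 / p.toReal)) ≤ c ∧
      auxStep u c ∈ BSet p α β ∩ MSet 1 := by
  obtain ⟨C, hC, hN⟩ := aux_step_norm p hp α β hα
  obtain ⟨cw, hcw, hw⟩ := aux_w_lo α β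
  refine ⟨C⁻¹, by positivity, fun u hu hu1 => ?_⟩
  have hNu := hN u hu hu1
  set N := LpOn (fun x => jacobi α β x * auxStep u 1 x) p (-1) 1 with hNdef
  have hNt : N ≠ ⊤ := ne_top_of_le_ne_top ENNReal.ofReal_ne_top hNu
  have hN0 : N ≠ 0 := by
    have := aux_eLp_lower (fun x => jacobi α β x * auxStep u 1 x) p hp (-1 + u / 4) (-1 + u / 2)
      (-1) 1 (cw * u ^ α) (by linarith) (by linarith) (by linarith) (by positivity) (by
        intro x hx
        have hx1 := hx.1
        have hx2 := hx.2
        have hwx := hw u x hu (by linarith) (by linarith) (by linarith)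
        have hlt : x < -1 + u := by linarith
        have hw0 : 0 ≤ jacobi α β x := aux_w_nonneg _ _ _ (by linarith) (by linarith)
        simp only [auxStep, hlt, if_true, abs_mul, abs_neg, abs_one, mul_one, abs_of_nonneg hw0]
        exact hwx)
    have hpos : 0 < ENNReal.ofReal (cw * u ^ α * (-1 + u / 2 - (-1 + u / 4)) ^ (1 / p.toReal)) := by
      rw [ENNReal.ofReal_pos]
      have : 0 < -1 + u / 2 - (-1 + u / 4) := by linarith
      positivity
    exact (hpos.trans_le this).ne'
  have hNr : 0 < N.toReal := ENNReal.toReal_pos hN0 hNt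
  refine ⟨N.toReal⁻¹, ?_, ⟨?_, ?_⟩, ?_⟩
  · have : N.toReal ≤ C * u ^ (α + 1 / p.toReal) :=
      ENNReal.toReal_le_of_le_ofReal (by positivity) hNu
    rw [Real.rpow_neg hu.le, ← mul_inv]
    exact inv_anti₀ hNr this
  · unfold auxStep
    exact Measurable.ite measurableSet_Iio measurable_const measurable_const
  · have e : (fun x => jacobi α β x * auxStep u N.toReal⁻¹ x) =
        N.toReal⁻¹ • (fun x => jacobi α β x * auxStep u 1 x) := by
      funext x
      simp only [Pi.smul_apply, smul_eq_mul, auxStep]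
      split_ifs <;> ring
    rw [e]
    unfold LpOn at hNdef ⊢
    rw [eLpNorm_const_smul, ← hNdef, Real.enorm_eq_ofReal (by positivity),
      ENNReal.ofReal_inv_of_pos hNr, ENNReal.ofReal_toReal hNt]
    exact ENNReal.inv_mul_cancel hN0 hNt
  · rw [aux_mono_iff]
    intro a _ b _ hab
    have : 0 < N.toReal⁻¹ := by positivity
    unfold auxStep
    split_ifs <;> linarith

lemma aux_lower1 (q p : ℝ≥0∞) (hq : q ≠ 0) (hp : p ≠ 0) (α β : ℝ) (hα : α ∈ Jset p) :
    ∃ c₁ > 0, ∀ δ : ℝ, 0 < δ → δ < 1 / 4 →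
      ENNReal.ofReal (c₁ * δ ^ (2 / q.toReal - 2 / p.toReal)) ≤
          (⨆ f ∈ BSet p α β ∩ MSet 1, omegaDT 1 f δ (jacobi α β) q) := by
  obtain ⟨c₀, hc₀, hst⟩ := aux_step_mem p hp α β hα
  obtain ⟨cw, hcw, hw⟩ := aux_w_lo α β
  refine ⟨c₀ * cw * (1 / 4) ^ (1 / q.toReal), by positivity, fun δ hδ0 hδ => ?_⟩
  have hd2 : 0 < δ ^ 2 := by positivity
  have hd1 : δ ^ 2 < 1 / 16 := by nlinarith
  obtain ⟨c, hc, hmem⟩ := hst (δ ^ 2) hd2 (by linarith)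
  have hc0 : 0 < c := lt_of_lt_of_le (by positivity) hc
  have hb : omegaDT 1 (auxStep (δ ^ 2) c) δ (jacobi α β) q ≤
      (⨆ f ∈ BSet p α β ∩ MSet 1, omegaDT 1 f δ (jacobi α β) q) :=
    le_iSup₂ (f := fun f (_ : f ∈ BSet p α β ∩ MSet 1) => omegaDT 1 f δ (jacobi α β) q) _ hmem
  refine le_trans ?_ hb
  have h1 : OmegaFwd 1 (auxStep (δ ^ 2) c) δ (jacobi α β) q ≤
      omegaDT 1 (auxStep (δ ^ 2) c) δ (jacobi α β) q := by
    unfold omegaDT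
    exact le_add_right le_add_self
  refine le_trans ?_ h1
  unfold OmegaFwd
  simp only [Nat.cast_one, one_pow, mul_one, one_mul]
  refine le_trans ?_ (le_iSup₂ (f := fun h (_ : h ∈ Ioc (0 : ℝ) (2 * δ ^ 2)) =>
    LpOn (fun x => jacobi α β x * symmDelta 1 h (auxStep (δ ^ 2) c) (x + h / 2)) q (-1)
      (-1 + 2 * δ ^ 2)) (2 * δ ^ 2) ⟨by linarith, le_rfl⟩)
  refine le_trans ?_ (aux_eLp_lower _ q hq (-1 + δ ^ 2 / 4) (-1 + δ ^ 2 / 2) _ _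
    (cw * (δ ^ 2) ^ α * c) (by linarith) (by linarith) (by linarith) (by positivity) ?_)
  · apply ENNReal.ofReal_le_ofReal
    have e1 : -1 + δ ^ 2 / 2 - (-1 + δ ^ 2 / 4) = (1 / 4) * δ ^ 2 := by ring
    rw [e1, Real.mul_rpow (by norm_num) hd2.le]
    have e2 : δ ^ (2 / q.toReal - 2 / p.toReal) =
        (δ ^ 2) ^ α * (δ ^ 2) ^ (-(α + 1 / p.toReal)) * (δ ^ 2) ^ (1 / q.toReal) := by
      rw [← Real.rpow_add hd2, ← Real.rpow_add hd2, ← Real.rpow_natCast δ 2,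
        ← Real.rpow_mul hδ0.le]
      congr 1
      push_cast; ring
    rw [e2]
    calc _ = cw * (δ ^ 2) ^ α * (c₀ * (δ ^ 2) ^ (-(α + 1 / p.toReal))) *
          ((1 / 4) ^ (1 / q.toReal) * (δ ^ 2) ^ (1 / q.toReal)) := by ring
      _ ≤ _ := by gcongr
  · intro x hx
    have hx1 := hx.1
    have hx2 := hx.2
    have hwx := hw (δ ^ 2) x hd2 (by linarith) (by linarith) (by linarith)
    have hw0 : 0 ≤ jacobi α β x := aux_w_nonneg _ _ _ (by linarith) (by linarith)
    have e1 : x + 2 * δ ^ 2 / 2 - 2 * δ ^ 2 / 2 = x := by ring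
    have e2 : x + 2 * δ ^ 2 / 2 + 2 * δ ^ 2 / 2 = x + 2 * δ ^ 2 := by ring
    have m : x ∈ Icc (-1 : ℝ) 1 ∧ x + 2 * δ ^ 2 ∈ Icc (-1 : ℝ) 1 :=
      ⟨⟨by linarith, by linarith⟩, by linarith, by linarith⟩
    have n1 : ¬ (x + 2 * δ ^ 2 < -1 + δ ^ 2) := by linarith
    have n2 : x < -1 + δ ^ 2 := by linarith
    rw [abs_mul, abs_of_nonneg hw0, aux_symm1, e1, e2, if_pos m]
    unfold auxStep
    rw [if_neg n1, if_pos n2, zero_sub, neg_neg, abs_of_pos hc0]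
    exact mul_le_mul_of_nonneg_right hwx hc0.le

lemma aux_lower2 (q p : ℝ≥0∞) (hq : q ≠ 0) (hp : p ≠ 0) (α β : ℝ) (hα : α ∈ Jset p) :
    ∃ c₁ > 0, ∀ δ : ℝ, 0 < δ → δ < 1 / 4 →
      ENNReal.ofReal (c₁ * δ ^ (1 / q.toReal)) ≤
          (⨆ f ∈ BSet p α β ∩ MSet 1, omegaDT 1 f δ (jacobi α β) q) := by
  obtain ⟨c₀, hc₀, hst⟩ := aux_step_mem p hp α β hα
  obtain ⟨cw, hcw, hw⟩ := aux_w_lo α β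
  obtain ⟨c, hc, hmem⟩ := hst 1 one_pos le_rfl
  have hc0 : 0 < c := lt_of_lt_of_le (by positivity) hc
  refine ⟨cw * c * (1 / 4) ^ (1 / q.toReal), by positivity, fun δ hδ0 hδ => ?_⟩
  have hd2 : 0 < δ ^ 2 := by positivity
  have hd1 : δ ^ 2 < 1 / 16 := by nlinarith
  have hb : omegaDT 1 (auxStep 1 c) δ (jacobi α β) q ≤
      (⨆ f ∈ BSet p α β ∩ MSet 1, omegaDT 1 f δ (jacobi α β) q) :=
    le_iSup₂ (f := fun f (_ : f ∈ BSet p α β ∩ MSet 1) => omegaDT 1 f δ (jacobi α β) q) _ hmem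
  refine le_trans ?_ hb
  have h1 : OmegaMain 1 (auxStep 1 c) δ (jacobi α β) q ≤
      omegaDT 1 (auxStep 1 c) δ (jacobi α β) q := by
    unfold omegaDT
    exact le_add_right le_self_add
  refine le_trans ?_ h1
  unfold OmegaMain
  simp only [Nat.cast_one, one_pow, mul_one]
  refine le_trans ?_ (le_iSup₂ (f := fun h (_ : h ∈ Ioc (0 : ℝ) δ) =>
    LpOn (fun x => jacobi α β x * symmDelta 1 (h * phiW x) (auxStep 1 c) x) q (-1 + 2 * h ^ 2)
      (1 - 2 * h ^ 2)) δ ⟨hδ0, le_rfl⟩)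
  refine le_trans ?_ (aux_eLp_lower _ q hq 0 (δ / 4) _ _
    (cw * c) (by linarith) (by linarith) (by linarith) (by positivity) ?_)
  · apply ENNReal.ofReal_le_ofReal
    have e1 : δ / 4 - 0 = (1 / 4) * δ := by ring
    rw [e1, Real.mul_rpow (by norm_num) hδ0.le, mul_assoc]
  · intro x hx
    have hx1 := hx.1
    have hx2 := hx.2
    have hwx := hw 1 x one_pos (by linarith) (by linarith) (by linarith)
    rw [Real.one_rpow, mul_one] at hwx
    have hw0 : 0 ≤ jacobi α β x := aux_w_nonneg _ _ _ (by linarith) (by linarith)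
    have p1 : 1 / 2 < phiW x := by
      unfold phiW
      rw [Real.lt_sqrt (by norm_num)]
      nlinarith
    have p2 : phiW x ≤ 1 := by
      unfold phiW
      rw [Real.sqrt_le_left (by norm_num)]
      nlinarith
    have q1 : δ / 4 < δ * phiW x / 2 := by nlinarith
    have q2 : δ * phiW x / 2 ≤ δ / 2 := by nlinarith
    have m : x - δ * phiW x / 2 ∈ Icc (-1 : ℝ) 1 ∧ x + δ * phiW x / 2 ∈ Icc (-1 : ℝ) 1 :=
      ⟨⟨by linarith, by linarith⟩, by linarith, by linarith⟩
    have n1 : ¬ (x + δ * phiW x / 2 < -1 + 1) := by linarith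
    have n2 : x - δ * phiW x / 2 < -1 + 1 := by linarith
    rw [abs_mul, abs_of_nonneg hw0, aux_symm1, if_pos m]
    unfold auxStep
    rw [if_neg n1, if_pos n2, zero_sub, neg_neg, abs_of_pos hc0]
    exact mul_le_mul_of_nonneg_right hwx hc0.le

lemma aux_J (p : ℝ≥0∞) (α : ℝ) (hα : α ∈ Jset p) : 0 ≤ α + 1 / p.toReal := by
  unfold Jset at hα
  split_ifs at hα with h
  · subst h; simpa using hα
  · have : -1 / p.toReal < α := hα
    rw [neg_div] at this
    linarith

theorem statement3 (q p : ℝ≥0∞) (hq : 1 ≤ q) (hqp : q < p) (hp2q : p ≠ 2 * q)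
    (α β : ℝ) (hα : α ∈ Jset p) (hβ : β ∈ Jset p) :
    ∃ c₁ > (0 : ℝ), ∃ c₂ > (0 : ℝ), ∀ δ : ℝ, 0 < δ → δ < 1 / 4 →
      (p < 2 * q →
        ENNReal.ofReal (c₁ * δ ^ (2 / q.toReal - 2 / p.toReal)) ≤
          (⨆ f ∈ BSet p α β ∩ MSet 1, omegaDT 1 f δ (jacobi α β) q) ∧
        (⨆ f ∈ BSet p α β ∩ MSet 1, omegaDT 1 f δ (jacobi α β) q) ≤
          ENNReal.ofReal (c₂ * δ ^ (2 / q.toReal - 2 / p.toReal))) ∧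
      (2 * q < p →
        ENNReal.ofReal (c₁ * δ ^ (1 / q.toReal)) ≤
          (⨆ f ∈ BSet p α β ∩ MSet 1, omegaDT 1 f δ (jacobi α β) q) ∧
        (⨆ f ∈ BSet p α β ∩ MSet 1, omegaDT 1 f δ (jacobi α β) q) ≤
          ENNReal.ofReal (c₂ * δ ^ (1 / q.toReal))) := by
  have hqt : q ≠ ⊤ := hqp.ne_top
  have hq0 : q ≠ 0 := (lt_of_lt_of_le one_pos hq).ne'
  have hp0 : p ≠ 0 := (lt_of_le_of_lt zero_le hqp).ne'
  have hQ : 0 < q.toReal := ENNReal.toReal_pos hq0 hqt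
  have hJα := aux_J p α hα
  have hJβ := aux_J p β hβ
  have hsQ : 1 / p.toReal * q.toReal < 1 := by
    by_cases hpt : p = ⊤
    · subst hpt; simp
    · have hP : 0 < p.toReal := ENNReal.toReal_pos hp0 hpt
      have : q.toReal < p.toReal := (ENNReal.toReal_lt_toReal hqt hpt).2 hqp
      rw [one_div_mul_eq_div, div_lt_one hP]
      exact this
  have h2q : (2 * q).toReal = 2 * q.toReal := by simp
  have h2qt : 2 * q ≠ ⊤ := ENNReal.mul_ne_top (by simp) hqt
  rcases lt_or_gt_of_ne hp2q with hlt | hgt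
  · have hpt : p ≠ ⊤ := hlt.ne_top
    have hP : 0 < p.toReal := ENNReal.toReal_pos hp0 hpt
    have hr : p.toReal < 2 * q.toReal := by
      rw [← h2q]; exact (ENNReal.toReal_lt_toReal hpt h2qt).2 hlt
    obtain ⟨c₁, hc₁, hlo⟩ := aux_lower1 q p hq0 hp0 α β hα
    obtain ⟨c₂, hc₂, hup⟩ := aux_upper q p hq hqt hp0 α β (2 / q.toReal - 2 / p.toReal) hsQ hJα hJβ
      (Or.inr ⟨by
        have : 1 / 2 < 1 / p.toReal * q.toReal := by
          rw [one_div_mul_eq_div, lt_div_iff₀ hP]; linarith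
        linarith, by field_simp⟩)
    refine ⟨c₁, hc₁, c₂, hc₂, fun δ hδ0 hδ => ⟨fun _ => ⟨hlo δ hδ0 hδ, ?_⟩, fun h => ?_⟩⟩
    · refine iSup₂_le fun f hf => ?_
      exact hup f ((aux_mono_iff f).1 hf.2) hf.1.2.le δ hδ0 hδ
    · exact absurd h hlt.not_gt
  · have hr : 1 / p.toReal * q.toReal < 1 / 2 := by
      by_cases hpt : p = ⊤
      · subst hpt; simp
      · have hP : 0 < p.toReal := ENNReal.toReal_pos hp0 hpt
        have : (2 * q).toReal < p.toReal := (ENNReal.toReal_lt_toReal h2qt hpt).2 hgt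
        rw [h2q] at this
        rw [one_div_mul_eq_div, div_lt_iff₀ hP]
        linarith
    obtain ⟨c₁, hc₁, hlo⟩ := aux_lower2 q p hq0 hp0 α β hα
    obtain ⟨c₂, hc₂, hup⟩ := aux_upper q p hq hqt hp0 α β (1 / q.toReal) hsQ hJα hJβ
      (Or.inl ⟨by linarith, by field_simp⟩)
    refine ⟨c₁, hc₁, c₂, hc₂, fun δ hδ0 hδ => ⟨fun h => ?_, fun _ => ⟨hlo δ hδ0 hδ, ?_⟩⟩⟩
    · exact absurd h hgt.not_gt
    · refine iSup₂_le fun f hf => ?_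
      exact hup f ((aux_mono_iff f).1 hf.2) hf.1.2.le δ hδ0 hδ
end
end
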